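/- arXiv:2405.09917 — 2 statements merged into one kernel-verified Lean document; each statement's English description precedes it below -/
import Mathlib

section
/- There is a dense G_δ subset of C_λ (in the uniform topology) such that every map f in this subset has normal level sets: there is a countable set E_f ⊂ (min f, max f) such that the level set Lev_f(c) = {x ∈ I : f(x) = c} is (i) a non-empty perfect set when c ∉ E_f ∪ {min f, max f}, (ii) a single point when c = min f or c = max f, and (iii) the union of a nonempty perfect set P with an isolated point x ∉ P when c ∈ E_f. -/
open MeasureTheory Set
open scoped ENNReal

noncomputable section

/-- `C_λ`: continuous maps of `[0,1]` preserving Lebesgue measure, with the uniform metric. -/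
abbrev CLam : Type := {f : C(unitInterval, unitInterval) // MeasurePreserving f volume volume}

/-- The level set `Lev_f(c) = {x ∈ I : f(x) = c}`. -/
def Lev (f : C(unitInterval, unitInterval)) (c : ℝ) : Set unitInterval :=
  {x : unitInterval | (f x : ℝ) = c}

/-- `min f`. -/
def minVal (f : C(unitInterval, unitInterval)) : ℝ :=
  sInf (Set.range fun x : unitInterval => (f x : ℝ))

/-- `max f`. -/
def maxVal (f : C(unitInterval, unitInterval)) : ℝ :=
  sSup (Set.range fun x : unitInterval => (f x : ℝ))

/-- `f` has normal level sets: there is a countable `E_f ⊂ (min f, max f)` such that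
`Lev_f(c)` is a non-empty perfect set for `c ∈ (min f, max f) \ E_f`, a single point
for `c ∈ {min f, max f}`, and the union of a nonempty perfect set `P` with an isolated
point `x ∉ P` for `c ∈ E_f`. -/
def HasNormalLevelSets (f : C(unitInterval, unitInterval)) : Prop :=
  ∃ E : Set ℝ, E.Countable ∧ E ⊆ Set.Ioo (minVal f) (maxVal f) ∧
    (∀ c ∈ Set.Ioo (minVal f) (maxVal f), c ∉ E →
      Perfect (Lev f c) ∧ (Lev f c).Nonempty) ∧
    (∀ c : ℝ, c = minVal f ∨ c = maxVal f → ∃ x : unitInterval, Lev f c = {x}) ∧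
    (∀ c ∈ E, ∃ (P : Set unitInterval) (x : unitInterval),
      Perfect P ∧ P.Nonempty ∧ x ∉ P ∧ Lev f c = P ∪ {x} ∧
      ∃ U : Set unitInterval, IsOpen U ∧ U ∩ Lev f c = {x})


/-! ### Completeness of `C_λ` -/

lemma clam_isClosed :
    IsClosed {f : C(unitInterval, unitInterval) | MeasurePreserving f volume volume} := by
  have key : {f : C(unitInterval, unitInterval) | MeasurePreserving f volume volume}
      = ⋂ φ : BoundedContinuousFunction unitInterval ℝ,
        {f : C(unitInterval, unitInterval) | ∫ x, φ (f x) = ∫ x, φ x} := by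
    ext f
    simp only [mem_ofPred_eq, mem_iInter]
    have hm : ∀ φ : BoundedContinuousFunction unitInterval ℝ,
        ∫ x, φ x ∂(Measure.map f volume) = ∫ x, φ (f x) := fun φ =>
      integral_map f.continuous.measurable.aemeasurable
        φ.continuous.aestronglyMeasurable
    constructor
    · intro hf φ
      rw [← hm φ, hf.map_eq]
    · intro h
      refine ⟨f.continuous.measurable, ?_⟩
      have : IsFiniteMeasure (Measure.map f (volume : Measure unitInterval)) := inferInstance
      apply ext_of_forall_integral_eq_of_IsFiniteMeasure
      intro φ
      rw [hm φ, h φ]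
  rw [key]
  refine isClosed_iInter fun φ => isClosed_eq ?_ continuous_const
  refine continuous_of_dominated (bound := fun _ => ‖φ‖) ?_ ?_ ?_ ?_
  · intro f
    exact (φ.continuous.comp f.continuous).aestronglyMeasurable
  · intro f
    exact Filter.Eventually.of_forall fun x => φ.norm_coe_le_norm _
  · exact integrable_const _
  · refine Filter.Eventually.of_forall fun x => ?_
    exact φ.continuous.comp (continuous_eval_const x)

instance clam_complete : CompleteSpace CLam :=
  clam_isClosed.completeSpace_coe

/-! ### Normalisation of a continuous function with null level sets -/

lemma volume_pos_of_isOpen {U : Set unitInterval} (hU : IsOpen U) (hne : U.Nonempty) :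
    0 < volume U := by
  obtain ⟨x, hx⟩ := hne
  obtain ⟨ε, hε, hb⟩ := Metric.isOpen_iff.mp hU x hx
  have hx0 := x.2.1
  have hx1 := x.2.2
  let a : unitInterval := ⟨max 0 (x - ε / 2), le_max_left _ _, max_le zero_le_one (by linarith)⟩
  let b : unitInterval := ⟨min 1 (x + ε / 2), le_min zero_le_one (by linarith), min_le_left _ _⟩
  have hab : (a : ℝ) < b := by
    change max 0 ((x : ℝ) - ε / 2) < min 1 ((x : ℝ) + ε / 2)
    rw [max_lt_iff, lt_min_iff, lt_min_iff]
    refine ⟨⟨by norm_num, by linarith⟩, by linarith, by linarith⟩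
  have hsub : Ioo a b ⊆ U := by
    intro y hy
    apply hb
    have h1 : (a : ℝ) < y := hy.1
    have h2 : (y : ℝ) < b := hy.2
    have h3 : (x : ℝ) - ε / 2 ≤ a := le_max_right _ _
    have h4 : (b : ℝ) ≤ x + ε / 2 := min_le_right _ _
    rw [Metric.mem_ball, Subtype.dist_eq, Real.dist_eq, abs_lt]
    constructor <;> linarith
  refine lt_of_lt_of_le ?_ (measure_mono hsub)
  rw [unitInterval.volume_Ioo, ENNReal.ofReal_pos]
  linarith

lemma exists_normalise (f : CLam) (g : unitInterval → ℝ) (hg : Continuous g)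
    (hnull : ∀ c : ℝ, volume {x | g x = c} = 0) (η : ℝ)
    (hclose : ∀ x, |g x - (f.1 x : ℝ)| ≤ η) :
    ∃ h : CLam, (∀ x y, (h.1 x : ℝ) < h.1 y ↔ g x < g y) ∧
      ∀ x, |(h.1 x : ℝ) - f.1 x| ≤ 2 * η := by
  have hη : 0 ≤ η := (abs_nonneg _).trans (hclose 0)
  set ν : Measure ℝ := Measure.map g volume with hν
  have : IsProbabilityMeasure ν := Measure.isProbabilityMeasure_map hg.measurable.aemeasurable
  set F := ProbabilityTheory.cdf ν with hF
  have hFeq : ∀ y, ENNReal.ofReal (F y) = volume {x | g x ≤ y} := by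
    intro y
    rw [hF, ProbabilityTheory.ofReal_cdf, hν, Measure.map_apply hg.measurable measurableSet_Iic]
    rfl
  have hF0 : ∀ y, 0 ≤ F y := ProbabilityTheory.cdf_nonneg ν
  have hF1 : ∀ y, F y ≤ 1 := ProbabilityTheory.cdf_le_one ν
  have hmono : Monotone F := ProbabilityTheory.monotone_cdf ν
  have hcont : Continuous F := by
    rw [continuous_iff_continuousAt]
    intro a
    rw [hmono.continuousAt_iff_leftLim_eq_rightLim, F.rightLim_eq]
    have h1 : F.measure {a} = 0 := by
      rw [hF, ProbabilityTheory.measure_cdf, hν,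
        Measure.map_apply hg.measurable (measurableSet_singleton a)]
      exact hnull a
    rw [F.measure_singleton, ENNReal.ofReal_eq_zero] at h1
    have h2 := hmono.leftLim_le (le_refl a)
    linarith
  have hlt : ∀ x y, g x < g y → F (g x) < F (g y) := by
    intro x y hxy
    have hopen : IsOpen (g ⁻¹' Ioo (g x) (g y)) := isOpen_Ioo.preimage hg
    have hne : (g ⁻¹' Ioo (g x) (g y)).Nonempty := by
      have := isPreconnected_univ.intermediate_value (mem_univ x) (mem_univ y)
        hg.continuousOn
      obtain ⟨z, -, hz⟩ := this (show (g x + g y) / 2 ∈ Icc (g x) (g y) from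
        ⟨by linarith, by linarith⟩)
      exact ⟨z, by rw [mem_preimage, hz]; constructor <;> linarith⟩
    have hpos : 0 < volume (g ⁻¹' Ioo (g x) (g y)) := volume_pos_of_isOpen hopen hne
    have hdis : Disjoint {z | g z ≤ g x} (g ⁻¹' Ioo (g x) (g y)) := by
      rw [Set.disjoint_left]
      intro z hz hz'
      exact absurd hz'.1 (not_lt.mpr hz)
    have hle : volume {z | g z ≤ g x} + volume (g ⁻¹' Ioo (g x) (g y))
        ≤ volume {z | g z ≤ g y} := by
      rw [← measure_union hdis hopen.measurableSet]
      apply measure_mono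
      rintro z (hz | hz)
      · exact le_trans hz hxy.le
      · exact hz.2.le
    have : ENNReal.ofReal (F (g x)) < ENNReal.ofReal (F (g y)) := by
      rw [hFeq, hFeq]
      refine lt_of_lt_of_le ?_ hle
      exact ENNReal.lt_add_right (measure_ne_top _ _) hpos.ne'
    exact (ENNReal.ofReal_lt_ofReal_iff_of_nonneg (hF0 _)).mp this
  let h0 : C(unitInterval, unitInterval) :=
    ⟨fun x => ⟨F (g x), hF0 _, hF1 _⟩, Continuous.subtype_mk (hcont.comp hg) _⟩
  have h0v : ∀ x, (h0 x : ℝ) = F (g x) := fun _ => rfl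
  -- measure preservation
  have hmeas : ∀ t : unitInterval, volume (h0 ⁻¹' Iic t) = ENNReal.ofReal t := by
    intro t
    obtain ⟨y0, hy0⟩ : ∃ y0, ∀ x, g x ≤ y0 := by
      obtain ⟨b, hb⟩ := (isCompact_range hg).bddAbove
      exact ⟨b, fun x => hb ⟨x, rfl⟩⟩
    have hFy0 : F y0 = 1 := by
      have := hFeq y0
      have h2 : {x | g x ≤ y0} = univ := eq_univ_of_forall hy0
      rw [h2, measure_univ] at this
      simpa using this
    obtain ⟨y1, hy1⟩ : ∃ y1, ∀ x, y1 < g x := by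
      obtain ⟨b, hb⟩ := (isCompact_range hg).bddBelow
      exact ⟨b - 1, fun x => by have := hb ⟨x, rfl⟩; linarith⟩
    have hFy1 : F y1 = 0 := by
      have := hFeq y1
      have h2 : {x | g x ≤ y1} = ∅ := by
        ext x; simp [hy1 x]
      rw [h2, measure_empty, ENNReal.ofReal_eq_zero] at this
      exact le_antisymm this (hF0 _)
    have hivt : ∀ s : ℝ, 0 ≤ s → s ≤ 1 → ∃ y, F y = s := by
      intro s hs0 hs1
      obtain ⟨z, -, hz⟩ := isPreconnected_univ.intermediate_value (mem_univ y1) (mem_univ y0)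
        hcont.continuousOn (show s ∈ Icc (F y1) (F y0) by rw [hFy0, hFy1]; exact ⟨hs0, hs1⟩)
      exact ⟨z, hz⟩
    apply le_antisymm
    · rcases eq_or_lt_of_le t.2.2 with h1 | h1
      · rw [h1, ENNReal.ofReal_one]; exact prob_le_one
      · refine le_of_forall_gt_imp_ge_of_dense fun a ha => ?_
        rcases le_or_gt 1 a with h1a | h1a
        · exact le_trans prob_le_one h1a
        · have hatop : a ≠ ⊤ := (h1a.trans ENNReal.one_lt_top).ne
          have h3 : (t : ℝ) < a.toReal := by
            rwa [← ENNReal.ofReal_lt_iff_lt_toReal t.2.1 hatop]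
          obtain ⟨y, hy⟩ := hivt a.toReal ENNReal.toReal_nonneg (by
            have := ENNReal.toReal_mono ENNReal.one_ne_top h1a.le
            simpa using this)
          have h4 := hFeq y
          rw [hy, ENNReal.ofReal_toReal hatop] at h4
          rw [h4]
          apply measure_mono
          intro x hx
          have hx' : F (g x) ≤ t := hx
          by_contra hc
          have := hmono (not_le.mp hc).le
          linarith
    · obtain ⟨y, hy⟩ := hivt t t.2.1 t.2.2
      rw [← hy, hFeq]
      apply measure_mono
      intro x hx
      change F (g x) ≤ t
      rw [← hy]
      exact hmono hx
  have hmp : MeasurePreserving h0 volume volume := by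
    refine ⟨h0.continuous.measurable, ?_⟩
    have : IsFiniteMeasure (Measure.map h0 (volume : Measure unitInterval)) := inferInstance
    apply Measure.ext_of_Iic
    intro t
    rw [Measure.map_apply h0.continuous.measurable measurableSet_Iic, hmeas,
      unitInterval.volume_Iic]
  refine ⟨⟨h0, hmp⟩, ?_, ?_⟩
  · intro x y
    change F (g x) < F (g y) ↔ _
    refine ⟨fun h => ?_, hlt x y⟩
    by_contra hc
    have := hmono (not_lt.mp hc)
    linarith
  · intro x
    change |F (g x) - f.1 x| ≤ _
    have hfm : ∀ t : unitInterval, volume {z | f.1 z ≤ t} = ENNReal.ofReal t := by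
      intro t
      have := f.2.measure_preimage (measurableSet_Iic (a := t)).nullMeasurableSet
      rw [unitInterval.volume_Iic] at this
      exact this
    have hx := abs_le.mp (hclose x)
    rw [abs_le]
    constructor
    · by_cases hs : (f.1 x : ℝ) - 2 * η < 0
      · have := hF0 (g x); linarith
      · have ht : (f.1 x : ℝ) - 2 * η ∈ unitInterval :=
          ⟨by linarith, by have := (f.1 x).2.2; linarith⟩
        have h1 := hfm ⟨_, ht⟩
        have h2 : volume {z | f.1 z ≤ ⟨_, ht⟩} ≤ volume {z | g z ≤ g x} := by
          apply measure_mono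
          intro z hz
          have hz' : (f.1 z : ℝ) ≤ f.1 x - 2 * η := hz
          have := abs_le.mp (hclose z)
          change g z ≤ g x
          linarith
        rw [h1, ← hFeq, ENNReal.ofReal_le_ofReal_iff (hF0 _)] at h2
        linarith
    · by_cases hs : 1 < (f.1 x : ℝ) + 2 * η
      · have := hF1 (g x); linarith
      · have ht : (f.1 x : ℝ) + 2 * η ∈ unitInterval :=
          ⟨by have := (f.1 x).2.1; linarith, by linarith⟩
        have h1 := hfm ⟨_, ht⟩
        have h2 : volume {z | g z ≤ g x} ≤ volume {z | f.1 z ≤ ⟨_, ht⟩} := by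
          apply measure_mono
          intro z hz
          have hz' : g z ≤ g x := hz
          have := abs_le.mp (hclose z)
          change (f.1 z : ℝ) ≤ f.1 x + 2 * η
          linarith
        rw [h1, ← hFeq, ENNReal.ofReal_le_ofReal_iff ht.1] at h2
        linarith

/-! ### The generic conditions -/

/-- `z` is an extremal point of `f` over the part of the unit interval in `[p, q]`. -/
def Extr (f : unitInterval → ℝ) (p q : ℝ) (z : unitInterval) : Prop :=
  (p ≤ z ∧ (z : ℝ) ≤ q) ∧
    ((∀ y : unitInterval, p ≤ y → (y : ℝ) ≤ q → f y ≤ f z) ∨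
      (∀ y : unitInterval, p ≤ y → (y : ℝ) ≤ q → f z ≤ f y))

/-- Extremal values over two disjoint intervals are different. -/
def SepExt (f : unitInterval → ℝ) (p q r s : ℝ) : Prop :=
  ∀ z z' : unitInterval, Extr f p q z → Extr f r s z' → f z ≠ f z'

/-- No point at which `f` is (weakly) increasing at scale `δ`. -/
def NoInc (δ : ℝ) (f : unitInterval → ℝ) : Prop :=
  ∀ x : unitInterval, ∃ y : unitInterval, |(y : ℝ) - x| < δ ∧
    ((y < x ∧ f x < f y) ∨ (x < y ∧ f y < f x))

/-- No point at which `f` is (weakly) decreasing at scale `δ`. -/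
def NoDec (δ : ℝ) (f : unitInterval → ℝ) : Prop :=
  ∀ x : unitInterval, ∃ y : unitInterval, |(y : ℝ) - x| < δ ∧
    ((y < x ∧ f y < f x) ∨ (x < y ∧ f x < f y))

/-- Evaluation as a real number. -/
def ev (f : CLam) (x : unitInterval) : ℝ := (f.1 x : ℝ)

lemma ev_cont : Continuous fun p : CLam × unitInterval => ev p.1 p.2 := by
  unfold ev
  exact continuous_subtype_val.comp
    ((continuous_subtype_val.comp continuous_fst).eval continuous_snd)

lemma ev_cont' (f : CLam) : Continuous (ev f) :=
  continuous_subtype_val.comp f.1.continuous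

lemma isOpen_all {X K : Type*} [TopologicalSpace X] [TopologicalSpace K] [CompactSpace K]
    {W : X → K → Prop} (hW : IsOpen {p : X × K | W p.1 p.2}) :
    IsOpen {x : X | ∀ k, W x k} := by
  have h := isClosedMap_fst_of_compactSpace (X := X) (Y := K) _ hW.isClosed_compl
  rw [← isClosed_compl_iff]
  convert h using 1
  ext x
  simp

lemma isOpen_noInc (δ : ℝ) : IsOpen {f : CLam | NoInc δ (ev f)} := by
  apply isOpen_all
  have e : {p : CLam × unitInterval | ∃ y : unitInterval, |(y : ℝ) - p.2| < δ ∧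
      ((y < p.2 ∧ ev p.1 p.2 < ev p.1 y) ∨ (p.2 < y ∧ ev p.1 y < ev p.1 p.2))} =
      ⋃ y : unitInterval, {p : CLam × unitInterval | |(y : ℝ) - p.2| < δ ∧
      ((y < p.2 ∧ ev p.1 p.2 < ev p.1 y) ∨ (p.2 < y ∧ ev p.1 y < ev p.1 p.2))} := by
    ext p; simp
  rw [e]
  refine isOpen_iUnion fun y => ?_
  have hy : Continuous fun p : CLam × unitInterval => ev p.1 y :=
    ev_cont.comp (continuous_fst.prodMk continuous_const)
  refine (isOpen_lt (by fun_prop) continuous_const).and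
    (IsOpen.union ((isOpen_lt continuous_const continuous_snd).and (isOpen_lt ev_cont hy))
      ((isOpen_lt continuous_snd continuous_const).and (isOpen_lt hy ev_cont)))

lemma isOpen_noDec (δ : ℝ) : IsOpen {f : CLam | NoDec δ (ev f)} := by
  apply isOpen_all
  have e : {p : CLam × unitInterval | ∃ y : unitInterval, |(y : ℝ) - p.2| < δ ∧
      ((y < p.2 ∧ ev p.1 y < ev p.1 p.2) ∨ (p.2 < y ∧ ev p.1 p.2 < ev p.1 y))} =
      ⋃ y : unitInterval, {p : CLam × unitInterval | |(y : ℝ) - p.2| < δ ∧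
      ((y < p.2 ∧ ev p.1 y < ev p.1 p.2) ∨ (p.2 < y ∧ ev p.1 p.2 < ev p.1 y))} := by
    ext p; simp
  rw [e]
  refine isOpen_iUnion fun y => ?_
  have hy : Continuous fun p : CLam × unitInterval => ev p.1 y :=
    ev_cont.comp (continuous_fst.prodMk continuous_const)
  refine (isOpen_lt (by fun_prop) continuous_const).and
    (IsOpen.union ((isOpen_lt continuous_const continuous_snd).and (isOpen_lt hy ev_cont))
      ((isOpen_lt continuous_snd continuous_const).and (isOpen_lt ev_cont hy)))

lemma isClosed_extr (p q : ℝ) :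
    IsClosed {w : CLam × unitInterval | Extr (ev w.1) p q w.2} := by
  have hy : ∀ y, Continuous fun p : CLam × unitInterval => ev p.1 y := fun y =>
    ev_cont.comp (continuous_fst.prodMk continuous_const)
  unfold Extr
  simp only [ofPred_and, ofPred_or, ofPred_forall]
  refine ((isClosed_le continuous_const (by fun_prop)).inter
    (isClosed_le (by fun_prop) continuous_const)).inter (IsClosed.union ?_ ?_)
  · exact isClosed_iInter fun y => isClosed_iInter fun _ => isClosed_iInter fun _ =>
      isClosed_le (hy y) ev_cont
  · exact isClosed_iInter fun y => isClosed_iInter fun _ => isClosed_iInter fun _ =>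
      isClosed_le ev_cont (hy y)

lemma isOpen_sepExt (p q r s : ℝ) : IsOpen {f : CLam | SepExt (ev f) p q r s} := by
  have : {f : CLam | SepExt (ev f) p q r s} = {f : CLam | ∀ k : unitInterval × unitInterval,
      Extr (ev f) p q k.1 → Extr (ev f) r s k.2 → ev f k.1 ≠ ev f k.2} := by
    ext f; simp [SepExt]
  rw [this]
  apply isOpen_all
  have h1 : Continuous fun w : CLam × unitInterval × unitInterval => (w.1, w.2.1) := by fun_prop
  have h2 : Continuous fun w : CLam × unitInterval × unitInterval => (w.1, w.2.2) := by fun_prop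
  have hc := (((isClosed_extr p q).preimage h1).inter ((isClosed_extr r s).preimage h2)).inter
    (isClosed_eq (ev_cont.comp h1) (ev_cont.comp h2))
  convert hc.isOpen_compl using 1
  ext w
  simp only [mem_ofPred_eq, mem_compl_iff, mem_inter_iff, mem_preimage, Function.comp]
  tauto

/-! ### Transfer along order-equivalence -/

lemma Extr.transfer {g h : unitInterval → ℝ} (hh : ∀ x y, h x < h y ↔ g x < g y)
    {p q : ℝ} {z : unitInterval} (H : Extr h p q z) : Extr g p q z := by
  have hle : ∀ x y, h x ≤ h y ↔ g x ≤ g y := fun x y => by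
    rw [← not_lt, ← not_lt, hh]
  unfold Extr at *
  simpa only [hle] using H

lemma SepExt.transfer {g h : unitInterval → ℝ} (hh : ∀ x y, h x < h y ↔ g x < g y)
    {p q r s : ℝ} (H : SepExt g p q r s) : SepExt h p q r s := by
  intro z z' hz hz' he
  refine H z z' (hz.transfer hh) (hz'.transfer hh) (le_antisymm ?_ ?_)
  · rw [← not_lt, ← hh, he]; exact lt_irrefl _
  · rw [← not_lt, ← hh, he]; exact lt_irrefl _

/-! ### Perturbation by a small linear term -/

/-- One-sided version of `Extr`: maximum for `b = true`, minimum for `b = false`. -/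
def ExtrB (b : Bool) (f : unitInterval → ℝ) (p q : ℝ) (z : unitInterval) : Prop :=
  (p ≤ z ∧ (z : ℝ) ≤ q) ∧
    ∀ y : unitInterval, p ≤ y → (y : ℝ) ≤ q → if b then f y ≤ f z else f z ≤ f y

lemma Extr.exists {f : unitInterval → ℝ} {p q : ℝ} {z : unitInterval} (h : Extr f p q z) :
    ∃ b, ExtrB b f p q z := by
  obtain ⟨h1, h2 | h2⟩ := h
  · exact ⟨true, h1, by simpa using h2⟩
  · exact ⟨false, h1, by simpa using h2⟩

lemma extrB_upper {f : unitInterval → ℝ} {p q t t' : ℝ} {b : Bool} {z1 z2 : unitInterval}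
    (htt : t < t') (h1 : ExtrB b (fun x => f x + t * x) p q z1)
    (h2 : ExtrB b (fun x => f x + t' * x) p q z2) :
    f z2 + t' * z2 ≤ f z1 + t * z1 + (t' - t) * q := by
  cases b
  · have := h2.2 z1 h1.1.1 h1.1.2
    simp only [Bool.false_eq_true, if_false] at this
    nlinarith [h1.1.2]
  · have := h1.2 z2 h2.1.1 h2.1.2
    simp only [if_true] at this
    nlinarith [h2.1.2]

lemma extrB_lower {f : unitInterval → ℝ} {p q t t' : ℝ} {b : Bool} {z1 z2 : unitInterval}
    (htt : t < t') (h1 : ExtrB b (fun x => f x + t * x) p q z1)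
    (h2 : ExtrB b (fun x => f x + t' * x) p q z2) :
    f z1 + t * z1 + (t' - t) * p ≤ f z2 + t' * z2 := by
  cases b
  · have := h1.2 z2 h2.1.1 h2.1.2
    simp only [Bool.false_eq_true, if_false] at this
    nlinarith [h2.1.1]
  · have := h2.2 z1 h1.1.1 h1.1.2
    simp only [if_true] at this
    nlinarith [h1.1.1]

lemma sepExt_bad (f : unitInterval → ℝ) {p q r s : ℝ} (hqr : q < r) :
    {t : ℝ | ¬ SepExt (fun x => f x + t * x) p q r s}.Countable := by
  let B : Bool → Bool → Set ℝ := fun b b' => {t : ℝ | ∃ z z' : unitInterval,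
    ExtrB b (fun x => f x + t * x) p q z ∧ ExtrB b' (fun x => f x + t * x) r s z' ∧
    f z + t * z = f z' + t * z'}
  have step : ∀ b b', ∀ t ∈ B b b', ∀ t' ∈ B b b', t < t' → False := by
    rintro b b' t ⟨z1, w1, hz1, hw1, e1⟩ t' ⟨z2, w2, hz2, hw2, e2⟩ htt
    have h1 := extrB_upper htt hz1 hz2
    have h2 := extrB_lower htt hw1 hw2
    nlinarith
  have hB : ∀ b b', (B b b').Subsingleton := by
    intro b b' t ht t' ht'
    rcases lt_trichotomy t t' with h | h | h
    · exact (step b b' t ht t' ht' h).elim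
    · exact h
    · exact (step b b' t' ht' t ht h).elim
  have hc : (⋃ b, ⋃ b', B b b').Countable :=
    countable_iUnion fun b => countable_iUnion fun b' => (hB b b').finite.countable
  refine hc.mono ?_
  intro t ht
  simp only [mem_ofPred_eq, SepExt] at ht
  push Not at ht
  obtain ⟨z, z', hz, hz', e⟩ := ht
  obtain ⟨b, hb⟩ := hz.exists
  obtain ⟨b', hb'⟩ := hz'.exists
  exact mem_iUnion.mpr ⟨b, mem_iUnion.mpr ⟨b', z, z', hb, hb', e⟩⟩

lemma null_bad (f : unitInterval → ℝ) (hf : Continuous f) :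
    {t : ℝ | ¬ ∀ c : ℝ, volume {x : unitInterval | f x + t * x = c} = 0}.Countable := by
  set T := {t : ℝ | ¬ ∀ c : ℝ, volume {x : unitInterval | f x + t * x = c} = 0} with hT
  have : ∀ t : T, ∃ c : ℝ, volume {x : unitInterval | f x + t * x = c} ≠ 0 := by
    intro t
    have := t.2
    simp only [hT, mem_ofPred_eq] at this
    push Not at this
    exact this
  choose c hc using this
  have hm : ∀ t : T, MeasurableSet {x : unitInterval | f x + t * x = c t} := fun t =>
    (isClosed_eq (by fun_prop) continuous_const).measurableSet
  have key := Measure.countable_meas_pos_of_disjoint_iUnion₀ (μ := (volume : Measure unitInterval))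
    (As := fun t : T => {x : unitInterval | f x + t * x = c t})
    (fun t => (hm t).nullMeasurableSet) (by
      intro t t' htt
      change volume ({x : unitInterval | f x + t * x = c t} ∩
        {x : unitInterval | f x + t' * x = c t'}) = 0
      apply Set.Subsingleton.measure_zero
      intro x hx y hy
      obtain ⟨hx1, hx2⟩ := hx
      obtain ⟨hy1, hy2⟩ := hy
      simp only [mem_ofPred_eq] at hx1 hx2 hy1 hy2
      have hne : (t : ℝ) - t' ≠ 0 := sub_ne_zero.mpr fun h => htt (Subtype.ext h)
      have : ((t : ℝ) - t') * ((x : ℝ) - y) = 0 := by linarith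
      rcases mul_eq_zero.mp this with h | h
      · exact absurd h hne
      · exact Subtype.ext (by linarith))
  have huniv : {t : T | 0 < volume {x : unitInterval | f x + t * x = c t}} = univ :=
    eq_univ_of_forall fun t => pos_iff_ne_zero.mpr (hc t)
  rw [huniv] at key
  exact Set.countable_coe_iff.mp (Set.countable_univ_iff.mp key)

/-! ### Density -/

lemma five_inc {g : unitInterval → ℝ} {δ : ℝ} {x e0 t1 t2 e1 : unitInterval}
    (h0 : e0 ≤ x) (h1 : x ≤ e1) (h01 : e0 ≤ t1) (h12 : t1 ≤ t2) (h21 : t2 ≤ e1)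
    (hδ : (e1 : ℝ) - e0 < δ) (ha : g t2 < g e0) (hb : g e1 < g t1) :
    ∃ y : unitInterval, |(y : ℝ) - x| < δ ∧ ((y < x ∧ g x < g y) ∨ (x < y ∧ g y < g x)) := by
  by_contra hc
  push Not at hc
  have near : ∀ y, e0 ≤ y → y ≤ e1 → |(y : ℝ) - x| < δ := by
    intro y hy0 hy1
    have a1 : (e0 : ℝ) ≤ y := hy0
    have a2 : (y : ℝ) ≤ e1 := hy1
    have a3 : (e0 : ℝ) ≤ x := h0
    have a4 : (x : ℝ) ≤ e1 := h1
    rw [abs_lt]; constructor <;> linarith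
  have L : ∀ y, e0 ≤ y → y ≤ e1 → y ≤ x → g y ≤ g x := by
    intro y hy0 hy1 hyx
    rcases eq_or_lt_of_le hyx with h | h
    · rw [h]
    · exact (hc y (near y hy0 hy1)).1 h
  have R : ∀ y, e0 ≤ y → y ≤ e1 → x ≤ y → g x ≤ g y := by
    intro y hy0 hy1 hyx
    rcases eq_or_lt_of_le hyx with h | h
    · rw [h]
    · exact (hc y (near y hy0 hy1)).2 h
  have h02 := h01.trans h12
  have h11 := h12.trans h21
  rcases le_total x t2 with h | h
  · have u := L e0 le_rfl (h0.trans h1) h0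
    have v := R t2 h02 h21 h
    linarith
  · have u := L t1 h01 h11 (h12.trans h)
    have v := R e1 (h0.trans h1) le_rfl h1
    linarith

lemma five_dec {g : unitInterval → ℝ} {δ : ℝ} {x e0 t1 t2 e1 : unitInterval}
    (h0 : e0 ≤ x) (h1 : x ≤ e1) (h01 : e0 ≤ t1) (h12 : t1 ≤ t2) (h21 : t2 ≤ e1)
    (hδ : (e1 : ℝ) - e0 < δ) (ha : g e0 < g t2) (hb : g t1 < g e1) :
    ∃ y : unitInterval, |(y : ℝ) - x| < δ ∧ ((y < x ∧ g y < g x) ∨ (x < y ∧ g x < g y)) := by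
  obtain ⟨y, hy, h⟩ := five_inc (g := fun x => - g x) h0 h1 h01 h12 h21 hδ
    (by simpa using ha) (by simpa using hb)
  exact ⟨y, hy, by simpa using h⟩

lemma NoInc.transfer {g h : unitInterval → ℝ} (hh : ∀ x y, h x < h y ↔ g x < g y)
    {δ : ℝ} (H : NoInc δ g) : NoInc δ h := by
  unfold NoInc at *
  simpa only [hh] using H

lemma NoDec.transfer {g h : unitInterval → ℝ} (hh : ∀ x y, h x < h y ↔ g x < g y)
    {δ : ℝ} (H : NoDec δ g) : NoDec δ h := by
  unfold NoDec at *
  simpa only [hh] using H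

lemma exists_cell (M : ℕ) (hM : 0 < M) (x : unitInterval) :
    ∃ k : ℕ, k + 1 ≤ M ∧ (k : ℝ) ≤ M * x ∧ (M : ℝ) * x ≤ k + 1 := by
  have hx0 := x.2.1
  have hx1 := x.2.2
  have hM' : (0 : ℝ) < M := by exact_mod_cast hM
  rcases eq_or_lt_of_le hx1 with h | h
  · obtain ⟨m, rfl⟩ := Nat.exists_eq_succ_of_ne_zero hM.ne'
    refine ⟨m, le_rfl, ?_, ?_⟩ <;> rw [h] <;> push_cast <;> linarith
  · refine ⟨⌊(M : ℝ) * x⌋₊, ?_, Nat.floor_le (by positivity), (Nat.lt_floor_add_one _).le⟩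
    rw [Nat.succ_le_iff, Nat.floor_lt (by positivity)]
    nlinarith

lemma exists_close (f : CLam) {ε δ : ℝ} (hε : 0 < ε) (hδ : 0 < δ) :
    ∃ h : CLam, dist h f < ε ∧ NoInc δ (ev h) ∧ NoDec δ (ev h) ∧
      ∀ p q r s : ℚ, q < r → SepExt (ev h) p q r s := by
  set a := ε / 8 with ha
  have ha0 : 0 < a := by positivity
  have huc : UniformContinuous (ev f) :=
    CompactSpace.uniformContinuous_of_continuous (ev_cont' f)
  obtain ⟨d, hd, hfd⟩ := Metric.uniformContinuous_iff.mp huc (a / 4) (by positivity)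
  obtain ⟨m, hm⟩ := exists_nat_one_div_lt (lt_min hd hδ)
  set M : ℕ := m + 1 with hMdef
  have hM : 0 < M := Nat.succ_pos m
  have hM' : (0 : ℝ) < M := by exact_mod_cast hM
  have hMd : 1 / (M : ℝ) < d := by
    rw [hMdef]; push_cast; exact hm.trans_le (min_le_left _ _)
  have hMδ : 1 / (M : ℝ) < δ := by
    rw [hMdef]; push_cast; exact hm.trans_le (min_le_right _ _)
  let f1 : unitInterval → ℝ := fun x => ev f x + a * Real.sin (4 * Real.pi * (M * x))
  have hf1 : Continuous f1 := by
    have := ev_cont' f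
    fun_prop
  -- choice of `t`
  have hbad : ({t : ℝ | ¬ ∀ c : ℝ, volume {x : unitInterval | f1 x + t * x = c} = 0} ∪
      ⋃ w : {w : ℚ × ℚ × ℚ × ℚ // w.2.1 < w.2.2.1},
        {t : ℝ | ¬ SepExt (fun x => f1 x + t * x) (w.1.1 : ℝ) (w.1.2.1 : ℝ) (w.1.2.2.1 : ℝ)
          (w.1.2.2.2 : ℝ)}).Countable :=
    (null_bad f1 hf1).union (countable_iUnion fun w => sepExt_bad f1 (by exact_mod_cast w.2))
  obtain ⟨t, htb, ht0, ht1⟩ := (hbad.dense_compl ℝ).exists_between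
    (show (0 : ℝ) < a / 4 by positivity)
  simp only [mem_compl_iff, mem_union, not_or, mem_ofPred_eq, not_not, mem_iUnion,
    not_exists] at htb
  obtain ⟨hnull, hsep⟩ := htb
  set g : unitInterval → ℝ := fun x => f1 x + t * x with hg
  have hgc : Continuous g := by fun_prop
  have hclose : ∀ x, |g x - (f.1 x : ℝ)| ≤ 2 * a := by
    intro x
    have e : g x - (f.1 x : ℝ) = a * Real.sin (4 * Real.pi * (M * x)) + t * x := by
      simp only [hg, f1, ev]; ring
    rw [e, abs_le]
    have s1 := Real.sin_le_one (4 * Real.pi * (M * x))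
    have s2 := Real.neg_one_le_sin (4 * Real.pi * (M * x))
    have hx0 := x.2.1
    have hx1 := x.2.2
    constructor <;> nlinarith
  obtain ⟨h, hord, hdist⟩ := exists_normalise f g hgc hnull (2 * a) hclose
  have hord' : ∀ x y, ev h x < ev h y ↔ g x < g y := hord
  -- behaviour on a cell
  have hcell : ∀ x : unitInterval, ∃ e0 t1 t2 t3 e1 : unitInterval, e0 ≤ x ∧ x ≤ e1 ∧
      e0 ≤ t1 ∧ t1 ≤ t2 ∧ t2 ≤ t3 ∧ t3 ≤ e1 ∧ (e1 : ℝ) - e0 < δ ∧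
      g t2 < g e0 ∧ g e1 < g t1 ∧ g e0 < g t3 ∧ g t2 < g e1 := by
    intro x
    obtain ⟨k, hk, hkx, hxk⟩ := exists_cell M hM x
    have hk' : (k : ℝ) + 1 ≤ M := by exact_mod_cast hk
    have mem : ∀ u : ℝ, 0 ≤ u → u ≤ 1 → ((k : ℝ) + u) / M ∈ unitInterval := by
      intro u hu0 hu1
      refine ⟨by positivity, ?_⟩
      rw [div_le_one hM']; linarith
    have hMne : (M : ℝ) ≠ 0 := hM'.ne'
    have val : ∀ (u : ℝ) (hu0 : 0 ≤ u) (hu1 : u ≤ 1) (v : ℝ), Real.sin (4 * Real.pi * u) = v →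
        g ⟨_, mem u hu0 hu1⟩ = ev f ⟨_, mem u hu0 hu1⟩ + a * v + t * (((k : ℝ) + u) / M) := by
      intro u hu0 hu1 v hv
      simp only [hg, f1]
      rw [mul_div_cancel₀ _ hMne]
      have : 4 * Real.pi * ((k : ℝ) + u) = 4 * Real.pi * u + ((2 * k : ℕ) : ℝ) * (2 * Real.pi) := by
        push_cast; ring
      rw [this, Real.sin_add_nat_mul_two_pi, hv]
    have close : ∀ (u v : ℝ) (hu0 : 0 ≤ u) (hu1 : u ≤ 1) (hv0 : 0 ≤ v) (hv1 : v ≤ 1),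
        |ev f ⟨_, mem u hu0 hu1⟩ - ev f ⟨_, mem v hv0 hv1⟩| < a / 4 := by
      intro u v hu0 hu1 hv0 hv1
      rw [← Real.dist_eq]
      apply hfd
      rw [Subtype.dist_eq, Real.dist_eq]
      refine lt_of_le_of_lt ?_ hMd
      simp only
      rw [← sub_div, abs_div, abs_of_pos hM']
      apply div_le_div_of_nonneg_right _ hM'.le
      rw [abs_le]; constructor <;> linarith
    have cmp : ∀ (u v : ℝ) (hu0 : 0 ≤ u) (hu1 : u ≤ 1) (hv0 : 0 ≤ v) (hv1 : v ≤ 1) (c c' : ℝ),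
        Real.sin (4 * Real.pi * u) = c → Real.sin (4 * Real.pi * v) = c' → c + 1 ≤ c' →
        g ⟨_, mem u hu0 hu1⟩ < g ⟨_, mem v hv0 hv1⟩ := by
      intro u v hu0 hu1 hv0 hv1 c c' hc hc' hcc
      rw [val u hu0 hu1 c hc, val v hv0 hv1 c' hc']
      have h1 := abs_lt.mp (close u v hu0 hu1 hv0 hv1)
      have h2 := (mem u hu0 hu1).2
      have h3 := (mem v hv0 hv1).1
      nlinarith [mul_le_mul_of_nonneg_left h2 ht0.le, mul_nonneg ht0.le h3,
        mul_le_mul_of_nonneg_left hcc ha0.le]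
    have s0 : Real.sin (4 * Real.pi * 0) = 0 := by simp
    have s1 : Real.sin (4 * Real.pi * 1) = 0 := by
      have := Real.sin_nat_mul_pi 4
      push_cast at this
      rwa [mul_one]
    have p1 : Real.sin (4 * Real.pi * (1 / 8)) = 1 := by
      rw [show 4 * Real.pi * (1 / 8) = Real.pi / 2 by ring, Real.sin_pi_div_two]
    have p2 : Real.sin (4 * Real.pi * (3 / 8)) = -1 := by
      rw [show 4 * Real.pi * (3 / 8) = Real.pi / 2 + Real.pi by ring, Real.sin_add_pi,
        Real.sin_pi_div_two]
    have p3 : Real.sin (4 * Real.pi * (5 / 8)) = 1 := by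
      rw [show 4 * Real.pi * (5 / 8) = Real.pi / 2 + 2 * Real.pi by ring, Real.sin_add_two_pi,
        Real.sin_pi_div_two]
    have le : ∀ (u v : ℝ) (hu0 : 0 ≤ u) (hu1 : u ≤ 1) (hv0 : 0 ≤ v) (hv1 : v ≤ 1), u ≤ v →
        (⟨_, mem u hu0 hu1⟩ : unitInterval) ≤ ⟨_, mem v hv0 hv1⟩ := by
      intro u v hu0 hu1 hv0 hv1 huv
      exact Subtype.mk_le_mk.mpr (div_le_div_of_nonneg_right (by linarith) hM'.le)
    refine ⟨⟨_, mem 0 le_rfl zero_le_one⟩, ⟨_, mem (1 / 8) (by norm_num) (by norm_num)⟩,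
      ⟨_, mem (3 / 8) (by norm_num) (by norm_num)⟩, ⟨_, mem (5 / 8) (by norm_num) (by norm_num)⟩,
      ⟨_, mem 1 zero_le_one le_rfl⟩, ?_, ?_, le _ _ (by norm_num) (by norm_num) (by norm_num) (by norm_num) (by norm_num),
      le _ _ (by norm_num) (by norm_num) (by norm_num) (by norm_num) (by norm_num), le _ _ (by norm_num) (by norm_num) (by norm_num) (by norm_num) (by norm_num), le _ _ (by norm_num) (by norm_num) (by norm_num) (by norm_num) (by norm_num),
      ?_, cmp _ _ (by norm_num) (by norm_num) (by norm_num) (by norm_num) _ _ p2 s0 (by norm_num), cmp _ _ (by norm_num) (by norm_num) (by norm_num) (by norm_num) _ _ s1 p1 (by norm_num),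
      cmp _ _ (by norm_num) (by norm_num) (by norm_num) (by norm_num) _ _ s0 p3 (by norm_num), cmp _ _ (by norm_num) (by norm_num) (by norm_num) (by norm_num) _ _ p2 s1 (by norm_num)⟩
    · change ((k : ℝ) + 0) / M ≤ x
      rw [div_le_iff₀ hM']; linarith
    · change (x : ℝ) ≤ ((k : ℝ) + 1) / M
      rw [le_div_iff₀ hM']; linarith
    · change ((k : ℝ) + 1) / M - ((k : ℝ) + 0) / M < δ
      rw [← sub_div]
      convert hMδ using 2
      ring
  refine ⟨h, ?_, NoInc.transfer hord' ?_, NoDec.transfer hord' ?_, ?_⟩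
  · rw [Subtype.dist_eq]
    refine lt_of_le_of_lt ((ContinuousMap.dist_le (show 0 ≤ ε / 2 by positivity)).mpr ?_)
      (half_lt_self hε)
    intro x
    rw [Subtype.dist_eq, Real.dist_eq]
    have := hdist x
    rw [ha] at this
    linarith
  · intro x
    obtain ⟨e0, t1, t2, t3, e1, h0, h1, h2, h3, h4, h5, h6, h7, h8, h9, h10⟩ := hcell x
    exact five_inc h0 h1 h2 h3 (h4.trans h5) h6 h7 h8
  · intro x
    obtain ⟨e0, t1, t2, t3, e1, h0, h1, h2, h3, h4, h5, h6, h7, h8, h9, h10⟩ := hcell x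
    exact five_dec h0 h1 (h2.trans h3) h4 h5 h6 h9 h10
  · intro p q r s hqr
    exact (hsep ⟨(p, q, r, s), hqr⟩).transfer hord'

/-! ### The generic conditions imply normal level sets -/

/-- All the generic conditions. -/
def Good (f : CLam) : Prop :=
  (∀ δ : ℝ, 0 < δ → NoInc δ (ev f)) ∧ (∀ δ : ℝ, 0 < δ → NoDec δ (ev f)) ∧
    ∀ p q r s : ℚ, q < r → SepExt (ev f) p q r s

lemma const_sign {g : unitInterval → ℝ} (hg : Continuous g) {s : Set unitInterval}
    (hs : IsPreconnected s) {c : ℝ} (hc : ∀ y ∈ s, g y ≠ c) :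
    (∀ y ∈ s, g y < c) ∨ (∀ y ∈ s, c < g y) := by
  by_contra h
  push Not at h
  obtain ⟨⟨y, hy, hy'⟩, z, hz, hz'⟩ := h
  obtain ⟨w, hw, hw'⟩ := hs.intermediate_value hz hy hg.continuousOn ⟨hz', hy'⟩
  exact hc w hw hw'

lemma Good.signs {f : CLam} (hf : Good f) {x : unitInterval} {c δ : ℝ} (hx : ev f x = c)
    (hδ : 0 < δ) (h : ∀ y : unitInterval, |(y : ℝ) - x| < δ → y ≠ x → ev f y ≠ c) :
    (∀ y : unitInterval, |(y : ℝ) - x| < δ → y ≠ x → ev f y < c) ∨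
      (∀ y : unitInterval, |(y : ℝ) - x| < δ → y ≠ x → c < ev f y) := by
  have hL : IsPreconnected {y : unitInterval | |(y : ℝ) - x| < δ ∧ y < x} := by
    apply OrdConnected.isPreconnected
    constructor
    rintro u ⟨hu, hu'⟩ v ⟨hv, hv'⟩ w ⟨hw, hw'⟩
    have a1 : (u : ℝ) ≤ w := hw
    have a2 : (w : ℝ) ≤ v := hw'
    rw [abs_lt] at hu hv
    refine ⟨?_, lt_of_le_of_lt hw' hv'⟩
    rw [abs_lt]; constructor <;> linarith
  have hR : IsPreconnected {y : unitInterval | |(y : ℝ) - x| < δ ∧ x < y} := by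
    apply OrdConnected.isPreconnected
    constructor
    rintro u ⟨hu, hu'⟩ v ⟨hv, hv'⟩ w ⟨hw, hw'⟩
    have a1 : (u : ℝ) ≤ w := hw
    have a2 : (w : ℝ) ≤ v := hw'
    rw [abs_lt] at hu hv
    refine ⟨?_, lt_of_lt_of_le hu' hw⟩
    rw [abs_lt]; constructor <;> linarith
  have hl := const_sign (ev_cont' f) hL (c := c) (fun y hy => h y hy.1 hy.2.ne)
  have hr := const_sign (ev_cont' f) hR (c := c) (fun y hy => h y hy.1 hy.2.ne')
  rcases hl with hl | hl <;> rcases hr with hr | hr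
  · left
    intro y hy hne
    rcases lt_or_gt_of_ne hne with h1 | h1
    · exact hl y ⟨hy, h1⟩
    · exact hr y ⟨hy, h1⟩
  · exfalso
    obtain ⟨y, hy, ⟨h1, h2⟩ | ⟨h1, h2⟩⟩ := hf.1 δ hδ x
    · have := hl y ⟨hy, h1⟩; linarith
    · have := hr y ⟨hy, h1⟩; linarith
  · exfalso
    obtain ⟨y, hy, ⟨h1, h2⟩ | ⟨h1, h2⟩⟩ := hf.2.1 δ hδ x
    · have := hl y ⟨hy, h1⟩; linarith
    · have := hr y ⟨hy, h1⟩; linarith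
  · right
    intro y hy hne
    rcases lt_or_gt_of_ne hne with h1 | h1
    · exact hl y ⟨hy, h1⟩
    · exact hr y ⟨hy, h1⟩

/-- `x` is a weak local extremum of `f` at scale `δ`. -/
def LocExt (f : CLam) (δ : ℝ) (x : unitInterval) : Prop :=
  (∀ y : unitInterval, |(y : ℝ) - x| < δ → ev f y ≤ ev f x) ∨
    (∀ y : unitInterval, |(y : ℝ) - x| < δ → ev f x ≤ ev f y)

lemma LocExt.extr {f : CLam} {δ : ℝ} {x : unitInterval} (h : LocExt f δ x) {p q : ℝ}
    (hp : (x : ℝ) - δ < p) (hp' : p ≤ x) (hq : (x : ℝ) ≤ q) (hq' : q < x + δ) :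
    Extr (ev f) p q x := by
  refine ⟨⟨hp', hq⟩, ?_⟩
  rcases h with h | h
  · exact Or.inl fun y h1 h2 => h y (by rw [abs_lt]; constructor <;> linarith)
  · exact Or.inr fun y h1 h2 => h y (by rw [abs_lt]; constructor <;> linarith)

lemma Good.unique {f : CLam} (hf : Good f) {x x' : unitInterval} {δ δ' : ℝ} (hδ : 0 < δ)
    (hδ' : 0 < δ') (h : LocExt f δ x) (h' : LocExt f δ' x') (he : ev f x = ev f x') :
    x = x' := by
  have aux : ∀ (x x' : unitInterval) (δ δ' : ℝ), 0 < δ → 0 < δ' → LocExt f δ x →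
      LocExt f δ' x' → ev f x = ev f x' → x < x' → False := by
    intro x x' δ δ' hδ hδ' h h' he hlt
    have hlt' : (x : ℝ) < x' := hlt
    obtain ⟨p, hp, hp'⟩ := exists_rat_btwn (show (x : ℝ) - δ < x by linarith)
    obtain ⟨q, hq, hq'⟩ := exists_rat_btwn
      (show (x : ℝ) < min (x + δ) ((x + x') / 2) from lt_min (by linarith) (by linarith))
    obtain ⟨r, hr, hr'⟩ := exists_rat_btwn
      (show max ((x' : ℝ) - δ') ((x + x') / 2) < x' from max_lt (by linarith) (by linarith))
    obtain ⟨s, hs, hs'⟩ := exists_rat_btwn (show (x' : ℝ) < x' + δ' by linarith)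
    rw [lt_min_iff] at hq'
    rw [max_lt_iff] at hr
    have hqr : q < r := by
      have : (q : ℝ) < r := by linarith
      exact_mod_cast this
    exact hf.2.2 p q r s hqr x x' (h.extr hp hp'.le hq.le hq'.1)
      (h'.extr hr.1 hr'.le hs.le hs') he
  rcases lt_trichotomy x x' with h1 | h1 | h1
  · exact (aux x x' δ δ' hδ hδ' h h' he h1).elim
  · exact h1
  · exact (aux x' x δ' δ hδ' hδ h' h he.symm h1).elim

/-- `x` is isolated in its level set. -/
def Isol (f : CLam) (x : unitInterval) : Prop :=
  ∃ δ : ℝ, 0 < δ ∧ ∀ y : unitInterval, |(y : ℝ) - x| < δ → y ≠ x → ev f y ≠ ev f x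

lemma Good.locExt {f : CLam} (hf : Good f) {x : unitInterval} (h : Isol f x) :
    ∃ δ : ℝ, 0 < δ ∧ LocExt f δ x := by
  obtain ⟨δ, hδ, h⟩ := h
  refine ⟨δ, hδ, ?_⟩
  rcases hf.signs rfl hδ h with h1 | h1
  · left
    intro y hy
    by_cases hne : y = x
    · rw [hne]
    · exact (h1 y hy hne).le
  · right
    intro y hy
    by_cases hne : y = x
    · rw [hne]
    · exact (h1 y hy hne).le

lemma accPt_of_not_isol {f : CLam} {x : unitInterval} {c : ℝ} (hx : ev f x = c)
    (h : ¬ Isol f x) : AccPt x (Filter.principal (Lev f.1 c)) := by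
  rw [accPt_iff_nhds]
  intro U hU
  obtain ⟨ε, hε, hb⟩ := Metric.mem_nhds_iff.mp hU
  by_contra hc
  push Not at hc
  refine h ⟨ε, hε, fun y hy hne he => hne (hc y ⟨hb ?_, ?_⟩)⟩
  · rwa [Metric.mem_ball, Subtype.dist_eq, Real.dist_eq]
  · exact he.trans hx

lemma lev_isClosed (f : CLam) (c : ℝ) : IsClosed (Lev f.1 c) :=
  isClosed_eq (ev_cont' f) continuous_const

lemma Good.countable {f : CLam} (hf : Good f) : {c : ℝ | ∃ x, ev f x = c ∧ Isol f x}.Countable := by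
  let B : Bool → ℚ × ℚ → Set ℝ := fun b w =>
    {c | ∃ x, ev f x = c ∧ ExtrB b (ev f) w.1 w.2 x}
  have hB : ∀ b w, (B b w).Subsingleton := by
    rintro b w c ⟨x, rfl, hx⟩ c' ⟨x', rfl, hx'⟩
    have h1 := hx.2 x' hx'.1.1 hx'.1.2
    have h2 := hx'.2 x hx.1.1 hx.1.2
    cases b
    · simp only [Bool.false_eq_true, if_false] at h1 h2
      exact le_antisymm h1 h2
    · simp only [if_true] at h1 h2
      exact le_antisymm h2 h1
  have hc : (⋃ b, ⋃ w, B b w).Countable :=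
    countable_iUnion fun b => countable_iUnion fun w => (hB b w).finite.countable
  refine hc.mono ?_
  rintro c ⟨x, hx, hi⟩
  obtain ⟨δ, hδ, h⟩ := hf.locExt hi
  obtain ⟨p, hp, hp'⟩ := exists_rat_btwn (show (x : ℝ) - δ < x by linarith)
  obtain ⟨q, hq, hq'⟩ := exists_rat_btwn (show (x : ℝ) < x + δ by linarith)
  obtain ⟨b, hb⟩ := (h.extr hp hp'.le hq.le hq').exists
  exact mem_iUnion.mpr ⟨b, mem_iUnion.mpr ⟨(p, q), x, hx, hb⟩⟩

lemma Good.normal {f : CLam} (hf : Good f) : HasNormalLevelSets f.1 := by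
  obtain ⟨xm, -, hxm⟩ := isCompact_univ.exists_isMinOn univ_nonempty (ev_cont' f).continuousOn
  obtain ⟨xM, -, hxM⟩ := isCompact_univ.exists_isMaxOn univ_nonempty (ev_cont' f).continuousOn
  have hm : ∀ y, ev f xm ≤ ev f y := fun y => hxm (mem_univ y)
  have hM : ∀ y, ev f y ≤ ev f xM := fun y => hxM (mem_univ y)
  have hmin : minVal f.1 = ev f xm := by
    apply IsLeast.csInf_eq
    exact ⟨⟨xm, rfl⟩, by rintro _ ⟨y, rfl⟩; exact hm y⟩
  have hmax : maxVal f.1 = ev f xM := by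
    apply IsGreatest.csSup_eq
    exact ⟨⟨xM, rfl⟩, by rintro _ ⟨y, rfl⟩; exact hM y⟩
  have hiso : ∀ c x x', ev f x = c → ev f x' = c → Isol f x → Isol f x' → x = x' := by
    intro c x x' hx hx' hi hi'
    obtain ⟨δ, hδ, h⟩ := hf.locExt hi
    obtain ⟨δ', hδ', h'⟩ := hf.locExt hi'
    exact hf.unique hδ hδ' h h' (hx.trans hx'.symm)
  have two : ∀ x y : unitInterval, |(y : ℝ) - x| < 2 := by
    intro x y
    have h1 := x.2.1
    have h2 := x.2.2
    have h3 := y.2.1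
    have h4 := y.2.2
    rw [abs_lt]; constructor <;> linarith
  refine ⟨{c | ∃ x, ev f x = c ∧ Isol f x} ∩ Ioo (minVal f.1) (maxVal f.1),
    hf.countable.mono inter_subset_left, inter_subset_right, ?_, ?_, ?_⟩
  · intro c hc hcE
    refine ⟨⟨lev_isClosed f c, ?_⟩, ?_⟩
    · intro x hx
      refine accPt_of_not_isol hx fun hi => hcE ⟨⟨x, hx, hi⟩, hc⟩
    · rw [hmin, hmax] at hc
      obtain ⟨z, -, hz⟩ := isPreconnected_univ.intermediate_value (mem_univ xm) (mem_univ xM)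
        (ev_cont' f).continuousOn ⟨hc.1.le, hc.2.le⟩
      exact ⟨z, hz⟩
  · rintro c (hc | hc)
    · refine ⟨xm, ?_⟩
      rw [hc, hmin]
      ext y
      simp only [mem_singleton_iff]
      constructor
      · intro hy
        have hy' : ev f y = ev f xm := hy
        refine hf.unique one_pos one_pos (Or.inr fun z _ => ?_) (Or.inr fun z _ => hm z) hy'
        rw [hy']; exact hm z
      · rintro rfl
        rfl
    · refine ⟨xM, ?_⟩
      rw [hc, hmax]
      ext y
      simp only [mem_singleton_iff]
      constructor
      · intro hy
        have hy' : ev f y = ev f xM := hy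
        refine hf.unique one_pos one_pos (Or.inl fun z _ => ?_) (Or.inl fun z _ => hM z) hy'
        rw [hy']; exact hM z
      · rintro rfl
        rfl
  · rintro c ⟨⟨x, hx, hi⟩, hc⟩
    rw [hmin, hmax] at hc
    obtain ⟨δ, hδ, hxi⟩ := id hi
    have hUx : Metric.ball x δ ∩ Lev f.1 c = {x} := by
      ext y
      simp only [mem_inter_iff, mem_singleton_iff]
      constructor
      · rintro ⟨h1, h2⟩
        by_contra hne
        rw [Metric.mem_ball, Subtype.dist_eq, Real.dist_eq] at h1
        exact hxi y h1 hne (Eq.trans h2 hx.symm)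
      · rintro rfl
        exact ⟨Metric.mem_ball_self hδ, hx⟩
    have hxL : x ∈ Lev f.1 c := hx
    refine ⟨Lev f.1 c \ {x}, x, ⟨?_, ?_⟩, ?_, fun h => h.2 rfl, ?_, Metric.ball x δ,
      Metric.isOpen_ball, hUx⟩
    · have : Lev f.1 c \ {x} = Lev f.1 c \ Metric.ball x δ := by
        rw [← hUx]
        ext y
        simp only [mem_diff, mem_inter_iff]
        tauto
      rw [this]
      exact (lev_isClosed f c).sdiff Metric.isOpen_ball
    · rintro y ⟨hy, hne⟩
      have hacc := accPt_of_not_isol hy fun hi' => hne (hiso c y x hy hx hi' hi)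
      rw [accPt_iff_nhds] at hacc ⊢
      intro U hU
      obtain ⟨z, ⟨⟨hz1, hz2⟩, hz3⟩, hz4⟩ := hacc (U ∩ {x}ᶜ)
        (Filter.inter_mem hU (isOpen_compl_singleton.mem_nhds hne))
      exact ⟨z, ⟨hz1, hz3, hz2⟩, hz4⟩
    · by_contra hemp
      rw [not_nonempty_iff_eq_empty, diff_eq_empty] at hemp
      rcases hf.signs hx two_pos (fun y _ hne he => hne (hemp he)) with h | h
      · have := h xM (two _ _) (by rintro rfl; linarith [hc.2])
        linarith [hc.2]
      · have := h xm (two _ _) (by rintro rfl; linarith [hc.1])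
        linarith [hc.1]
    · rw [diff_union_self]
      exact (union_eq_left.mpr (singleton_subset_iff.mpr hxL)).symm

lemma NoInc.mono {g : unitInterval → ℝ} {δ δ' : ℝ} (h : δ ≤ δ') (H : NoInc δ g) : NoInc δ' g :=
  fun x => let ⟨y, hy, hy'⟩ := H x; ⟨y, hy.trans_le h, hy'⟩

lemma NoDec.mono {g : unitInterval → ℝ} {δ δ' : ℝ} (h : δ ≤ δ') (H : NoDec δ g) : NoDec δ' g :=
  fun x => let ⟨y, hy, hy'⟩ := H x; ⟨y, hy.trans_le h, hy'⟩

/-- The countable family of open dense sets. -/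
def Gset (i : ℕ × {w : ℚ × ℚ × ℚ × ℚ // w.2.1 < w.2.2.1}) : Set CLam :=
  ({f | NoInc (1 / ((i.1 : ℝ) + 1)) (ev f)} ∩ {f | NoDec (1 / ((i.1 : ℝ) + 1)) (ev f)}) ∩
    {f | SepExt (ev f) (i.2.1.1 : ℝ) (i.2.1.2.1 : ℝ) (i.2.1.2.2.1 : ℝ) (i.2.1.2.2.2 : ℝ)}

lemma Gset_open (i) : IsOpen (Gset i) :=
  ((isOpen_noInc _).inter (isOpen_noDec _)).inter (isOpen_sepExt _ _ _ _)

lemma Gset_dense (i) : Dense (Gset i) := by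
  rw [Metric.dense_iff]
  intro f ε hε
  obtain ⟨h, h1, h2, h3, h4⟩ := exists_close f hε
    (show (0 : ℝ) < 1 / ((i.1 : ℝ) + 1) by positivity)
  exact ⟨h, h1, ⟨h2, h3⟩, h4 _ _ _ _ i.2.2⟩

lemma good_of_mem {f : CLam} (hf : f ∈ ⋂ i, Gset i) : Good f := by
  rw [mem_iInter] at hf
  let w0 : {w : ℚ × ℚ × ℚ × ℚ // w.2.1 < w.2.2.1} := ⟨(0, 0, 1, 1), by norm_num⟩
  refine ⟨fun δ hδ => ?_, fun δ hδ => ?_, fun p q r s hqr => ?_⟩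
  · obtain ⟨n, hn⟩ := exists_nat_one_div_lt hδ
    exact NoInc.mono hn.le (hf (n, w0)).1.1
  · obtain ⟨n, hn⟩ := exists_nat_one_div_lt hδ
    exact NoDec.mono hn.le (hf (n, w0)).1.2
  · exact (hf (0, ⟨(p, q, r, s), hqr⟩)).2

/-- There is a dense `G_δ` subset of `C_λ` (uniform topology) every member of which has
normal level sets. -/
theorem stmt12 :
    ∃ S : Set CLam, IsGδ S ∧ Dense S ∧ ∀ f ∈ S, HasNormalLevelSets f.1 := by
  exact ⟨⋂ i, Gset i, IsGδ.iInter_of_isOpen Gset_open,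
    dense_iInter_of_isOpen Gset_open Gset_dense, fun f hf => (good_of_mem hf).normal⟩

end
end

section
/- There is a dense G_δ subset Q of C_λ such that for each f ∈ Q there exists a set X_f ⊆ I of Lebesgue measure 1 with: f restricted to X_f is a bijection of X_f onto itself, and λ(M) = λ(M ∩ X_f) = λ(f⁻¹(M ∩ X_f)) for every Borel set M ⊆ I. -/
open MeasureTheory Set
open scoped ENNReal

open scoped unitInterval

lemma cdf_cont (μ : Measure I) [IsFiniteMeasure μ] (C : NNReal) (h : μ ≤ C • volume) :
    Continuous (fun y : I => μ.real (Iic y)) := by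
  have key : ∀ y z : I, y ≤ z → μ.real (Iic z) - μ.real (Iic y) ≤ C * (z - y : ℝ) := by
    intro y z hyz
    have h1 : μ.real (Iic z) - μ.real (Iic y) = μ.real (Ioc y z) := by
      rw [← Iic_sdiff_Iic, measureReal_sdiff (Iic_subset_Iic.2 hyz) measurableSet_Iic]
    rw [h1]
    have h2 : μ (Ioc y z) ≤ (C : ℝ≥0∞) * ENNReal.ofReal (z - y) := by
      refine (h _).trans ?_
      rw [Measure.smul_apply, unitInterval.volume_Ioc, ENNReal.smul_def, smul_eq_mul]
    have h3 : (0:ℝ) ≤ z - y := sub_nonneg.2 (show (y:ℝ) ≤ z from hyz)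
    have := ENNReal.toReal_mono (by finiteness) h2
    simpa [Measure.real, ENNReal.toReal_mul, h3] using this
  refine (LipschitzWith.of_le_add_mul C (fun y z => ?_)).continuous
  rcases le_total y z with hyz | hyz
  · have : μ.real (Iic y) ≤ μ.real (Iic z) := measureReal_mono (Iic_subset_Iic.2 hyz)
    have : 0 ≤ (C:ℝ) * dist y z := by positivity
    linarith
  · have := key z y hyz
    have h4 : dist y z = (y:ℝ) - z := by
      rw [Subtype.dist_eq, Real.dist_eq, abs_of_nonneg (sub_nonneg.2 (show (z:ℝ) ≤ y from hyz))]
    rw [h4]; linarith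

lemma transport (μ ν : Measure I) (C : NNReal) (hμ : μ ≤ C • volume) (hν : ν ≤ C • volume)
    [IsFiniteMeasure μ] [IsFiniteMeasure ν] (htot : μ univ = ν univ)
    (hpos : ∀ U : Set I, IsOpen U → U.Nonempty → ν U ≠ 0) :
    ∃ φ : I → I, Continuous φ ∧ Monotone φ ∧ μ.map φ = ν ∧
      ∀ y, μ (Iic y) = ν (Iic y) → φ y = y := by
  have cμ := cdf_cont μ C hμ
  have cν := cdf_cont ν C hν
  have hsingle : ∀ (m : Measure I), m ≤ C • volume → ∀ x, m {x} = 0 := by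
    intro m hm x
    have := hm {x}
    simpa using this
  have Iic0 : Iic (0:I) = {0} := by ext x; simp
  have Iic1 : Iic (1:I) = univ := by ext x; simpa using (show x ≤ 1 from x.2.2)
  have sν : StrictMono (fun y : I => ν.real (Iic y)) := by
    intro y z hyz
    have h1 : ν.real (Iic z) - ν.real (Iic y) = ν.real (Ioc y z) := by
      rw [← Iic_sdiff_Iic, measureReal_sdiff (Iic_subset_Iic.2 hyz.le) measurableSet_Iic]
    have h2 : 0 < ν.real (Ioc y z) := by
      refine ENNReal.toReal_pos ?_ (measure_ne_top _ _)
      intro h0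
      refine hpos (Ioo y z) isOpen_Ioo (nonempty_Ioo.2 hyz) ?_
      exact measure_mono_null Ioo_subset_Ioc_self h0
    show ν.real (Iic y) < ν.real (Iic z)
    linarith
  have mμ : Monotone (fun y : I => μ.real (Iic y)) := fun y z hyz =>
    measureReal_mono (Iic_subset_Iic.2 hyz)
  have range : ∀ (m : Measure I) [IsFiniteMeasure m], m ≤ C • volume → 
      ∀ c, 0 ≤ c → c ≤ m.real univ → ∃ z : I, m.real (Iic z) = c := by
    intro m _ hm c h0 h1
    have := intermediate_value_univ (0:I) 1 (cdf_cont m C hm)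
    refine this ⟨?_, ?_⟩
    · simpa [Iic0, Measure.real, hsingle m hm] using h0
    · simpa [Iic1] using h1
  have htot' : μ.real univ = ν.real univ := by simp [Measure.real, htot]
  have hex : ∀ y : I, ∃ z : I, ν.real (Iic z) = μ.real (Iic y) := fun y =>
    range ν hν _ measureReal_nonneg (htot' ▸ measureReal_mono (subset_univ _))
  choose φ hφ using hex
  have emb : Topology.IsEmbedding (fun y : I => ν.real (Iic y)) :=
    (cν.isClosedEmbedding sν.injective).isEmbedding
  have cφ : Continuous φ := by
    rw [emb.continuous_iff]
    simpa [Function.comp_def, hφ] using cμ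
  have mφ : Monotone φ := by
    intro y z hyz
    rw [← sν.le_iff_le]
    simpa [hφ] using mμ hyz
  refine ⟨φ, cφ, mφ, ?_, ?_⟩
  · have : IsFiniteMeasure (μ.map φ) := Measure.isFiniteMeasure_map μ φ
    refine Measure.ext_of_Iic _ _ (fun z => ?_)
    rw [Measure.map_apply cφ.measurable measurableSet_Iic]
    obtain ⟨y0, hy0⟩ := range μ hμ (ν.real (Iic z)) measureReal_nonneg
      (htot' ▸ measureReal_mono (subset_univ _))
    have hS : φ ⁻¹' Iic z = {y | μ.real (Iic y) ≤ ν.real (Iic z)} := by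
      ext y
      simp only [mem_preimage, mem_Iic, mem_ofPred_eq, ← hφ y]
      exact (sν.le_iff_le).symm
    have hcl : IsCompact (φ ⁻¹' Iic z) := (isClosed_Iic.preimage cφ).isCompact
    have hmem0 : y0 ∈ φ ⁻¹' Iic z := by rw [hS]; exact hy0.le
    obtain ⟨y1, hy1, hy1m⟩ := hcl.exists_isGreatest ⟨y0, hmem0⟩
    have hS' : φ ⁻¹' Iic z = Iic y1 := by
      ext y
      exact ⟨fun h => hy1m h, fun h => (mφ h).trans hy1⟩
    rw [hS']
    rw [← ENNReal.toReal_eq_toReal_iff' (measure_ne_top _ _) (measure_ne_top _ _)]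
    apply le_antisymm
    · rw [hS] at hy1; exact hy1
    · have := mμ (hy1m hmem0)
      simp only at this
      rw [hy0] at this
      exact this
  · intro y hy
    apply sν.injective
    simp only [hφ]
    simp [Measure.real, hy]

lemma open_vol_ne_zero (U : Set I) (hU : IsOpen U) (hUn : U.Nonempty) : volume U ≠ 0 := by
  obtain ⟨a, b, hab, hsub⟩ := hU.exists_Ioo_subset hUn
  intro h0
  have h1 := measure_mono_null hsub h0
  rw [unitInterval.volume_Ioo, ENNReal.ofReal_eq_zero] at h1
  have : (a:ℝ) < b := hab
  linarith

/-- Cell averaging of a measure. -/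
noncomputable def cellAvg (e : ℤ → I) (μ : Measure I) : Measure I :=
  Measure.sum fun k => (μ (Ico (e k) (e (k+1))) / volume (Ico (e k) (e (k+1)))) •
    (volume : Measure I).restrict (Ico (e k) (e (k+1)))

lemma cells_disj (e : ℤ → I) (he : Monotone e) :
    Pairwise (Function.onFun Disjoint (fun k : ℤ => Ico (e k) (e (k+1)))) := by
  simpa using he.pairwise_disjoint_on_Ico_succ

lemma cells_sum (e : ℤ → I) (he : Monotone e)
    (hcov : ∀ y : I, y ≠ 1 → ∃ k, y ∈ Ico (e k) (e (k+1))) :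
    (Measure.sum fun k : ℤ => (volume : Measure I).restrict (Ico (e k) (e (k+1)))) = volume := by
  rw [← Measure.restrict_iUnion (cells_disj e he) (fun _ => measurableSet_Ico)]
  rw [Measure.restrict_eq_self_of_ae_mem]
  have : ∀ᵐ y : I, y ≠ 1 := by
    rw [ae_iff]; simp
  filter_upwards [this] with y hy
  exact mem_iUnion.2 (hcov y hy)

lemma cellAvg_le (e : ℤ → I) (he : Monotone e)
    (hcov : ∀ y : I, y ≠ 1 → ∃ k, y ∈ Ico (e k) (e (k+1))) (μ : Measure I) (hμ : μ ≤ volume) :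
    cellAvg e μ ≤ volume := by
  conv_rhs => rw [← cells_sum e he hcov]
  rw [Measure.le_iff]
  intro s hs
  rw [cellAvg, Measure.sum_apply _ hs, Measure.sum_apply _ hs]
  refine ENNReal.tsum_le_tsum fun k => ?_
  rw [Measure.smul_apply, smul_eq_mul]
  refine mul_le_of_le_one_left (by simp) ?_
  exact ENNReal.div_le_of_le_mul (by rw [one_mul]; exact hμ _)

lemma cellAvg_cell (e : ℤ → I) (he : Monotone e) (μ : Measure I) (hμ : μ ≤ volume) (k : ℤ) :
    cellAvg e μ (Ico (e k) (e (k+1))) = μ (Ico (e k) (e (k+1))) := by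
  rw [cellAvg, Measure.sum_apply _ measurableSet_Ico, tsum_eq_single k]
  · rw [Measure.smul_apply, Measure.restrict_apply_self, smul_eq_mul]
    apply ENNReal.div_mul_cancel'
    · intro h; exact le_antisymm (h ▸ hμ _) bot_le
    · intro h; exact absurd h (measure_ne_top _ _)
  · intro j hj
    rw [Measure.smul_apply, Measure.restrict_apply measurableSet_Ico,
      (cells_disj e he hj.symm).inter_eq]
    simp

lemma eq_of_cells (e : ℤ → I) (he : Monotone e)
    (hcov : ∀ y : I, y ≠ 1 → ∃ k, y ∈ Ico (e k) (e (k+1))) (μ ν : Measure I)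
    (h : ∀ k, μ (Ico (e k) (e (k+1))) = ν (Ico (e k) (e (k+1)))) (k : ℤ) :
    μ (Iio (e k)) = ν (Iio (e k)) := by
  have hU : Iio (e k) = ⋃ j : Iio k, Ico (e j) (e (j+1)) := by
    ext y
    simp only [mem_Iio, mem_iUnion, Subtype.exists, exists_prop]
    constructor
    · intro hy
      obtain ⟨j, hj⟩ := hcov y (ne_of_lt (hy.trans_le (show e k ≤ 1 from (e k).2.2)))
      refine ⟨j, ?_, hj⟩
      by_contra hlt
      exact absurd (hy.trans_le ((he (not_lt.1 hlt)).trans hj.1)) (lt_irrefl _)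
    · rintro ⟨j, hj, hy⟩
      exact hy.2.trans_le (he (by omega))
  have hd : Pairwise (Function.onFun Disjoint (fun j : Iio k => Ico (e j) (e (j+1)))) :=
    fun i j hij => cells_disj e he (fun hh => hij (Subtype.ext hh))
  rw [hU, measure_iUnion hd (fun _ => measurableSet_Ico),
    measure_iUnion hd (fun _ => measurableSet_Ico)]
  exact tsum_congr fun j => h j

lemma eq_of_cells_univ (e : ℤ → I) (he : Monotone e)
    (hcov : ∀ y : I, y ≠ 1 → ∃ k, y ∈ Ico (e k) (e (k+1))) (μ ν : Measure I)
    (hμ : μ {1} = 0) (hν : ν {1} = 0)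
    (h : ∀ k, μ (Ico (e k) (e (k+1))) = ν (Ico (e k) (e (k+1)))) :
    μ univ = ν univ := by
  have key : ∀ m : Measure I, m {1} = 0 → m univ = ∑' k, m (Ico (e k) (e (k+1))) := by
    intro m hm
    rw [← measure_iUnion (cells_disj e he) (fun _ => measurableSet_Ico)]
    apply le_antisymm
    · have : (univ : Set I) ⊆ {1} ∪ ⋃ k, Ico (e k) (e (k+1)) := by
        intro y _
        by_cases hy : y = 1
        · left; exact hy
        · right; exact mem_iUnion.2 (hcov y hy)
      refine (measure_mono this).trans ((measure_union_le _ _).trans ?_)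
      rw [hm, zero_add]
    · exact measure_mono (subset_univ _)
  rw [key μ hμ, key ν hν]
  exact tsum_congr h

lemma cell_transport (e : ℤ → I) (he : Monotone e)
    (hcov : ∀ y : I, y ≠ 1 → ∃ k, y ∈ Ico (e k) (e (k+1))) (h : ℝ)
    (hmesh : ∀ k, (e (k+1) : ℝ) - e k ≤ h) (hh : 0 ≤ h)
    (μ : Measure I) (hμ : μ ≤ volume) (A : Set I)
    (hA : ∀ k, volume (A ∩ Ico (e k) (e (k+1))) = μ (Ico (e k) (e (k+1))))
    (η : ℝ≥0∞) (hη0 : η ≠ 0) (hη1 : η ≤ 1) :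
    ∃ φ : I → I, Continuous φ ∧ (∀ k, φ (e k) = e k) ∧ (∀ y, |(φ y : ℝ) - y| ≤ h) ∧
      μ.map φ = (1 - η) • (volume : Measure I).restrict A + η • cellAvg e μ := by
  set ν := (1 - η) • (volume : Measure I).restrict A + η • cellAvg e μ with hνdef
  have hηs : 1 - η + η = 1 := tsub_add_cancel_of_le hη1
  have hν : ν ≤ volume := by
    rw [Measure.le_iff]
    intro s hs
    rw [hνdef]
    simp only [Measure.add_apply, Measure.smul_apply, smul_eq_mul]
    calc _ ≤ (1 - η) * volume s + η * volume s := by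
          gcongr
          · exact Measure.restrict_le_self
          · exact cellAvg_le e he hcov μ hμ
      _ = volume s := by rw [← add_mul, hηs, one_mul]
  have hcell : ∀ k, μ (Ico (e k) (e (k+1))) = ν (Ico (e k) (e (k+1))) := by
    intro k
    rw [hνdef]
    simp only [Measure.add_apply, Measure.smul_apply, smul_eq_mul, cellAvg_cell e he μ hμ,
      Measure.restrict_apply measurableSet_Ico]
    rw [inter_comm, hA, ← add_mul, hηs, one_mul]
  have z : ∀ m : Measure I, m ≤ volume → ∀ x, m {x} = 0 := by
    intro m hm x
    have := hm {x}
    simpa using this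
  have IicIio : ∀ m : Measure I, m ≤ volume → ∀ x, m (Iic x) = m (Iio x) := by
    intro m hm x
    apply le_antisymm
    · rw [← Iio_union_right]
      refine (measure_union_le _ _).trans ?_
      rw [z m hm, add_zero]
    · exact measure_mono Iio_subset_Iic_self
  set E : Set I := ⋃ k : ℤ, ⋃ (_ : μ (Ico (e k) (e (k+1))) = 0), Ico (e k) (e (k+1)) with hE
  have hEm : MeasurableSet E :=
    MeasurableSet.iUnion fun k => MeasurableSet.iUnion fun _ => measurableSet_Ico
  set θ := (volume : Measure I).restrict E with hθ
  have hθle : θ ≤ volume := Measure.restrict_le_self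
  have fμ : IsFiniteMeasure μ := isFiniteMeasure_of_le volume hμ
  have fν : IsFiniteMeasure ν := isFiniteMeasure_of_le volume hν
  have hends : ∀ k, μ (Iic (e k)) = ν (Iic (e k)) := by
    intro k
    rw [IicIio μ hμ, IicIio ν hν]
    exact eq_of_cells e he hcov μ ν hcell k
  have huniv := eq_of_cells_univ e he hcov μ ν (z μ hμ _) (z ν hν _) hcell
  have htwo : ∀ m : Measure I, m ≤ volume → m + θ ≤ (2 : NNReal) • (volume : Measure I) := by
    intro m hm
    rw [two_smul]
    exact add_le_add hm hθle
  obtain ⟨φ, cφ, mφ, hmap, hfix⟩ := transport (μ + θ) (ν + θ) 2 (htwo μ hμ) (htwo ν hν)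
    (by simp [huniv]) (by
      intro U hU hUn h0
      have hpos : volume U ≠ 0 := open_vol_ne_zero U hU hUn
      apply hpos
      rw [← cells_sum e he hcov, Measure.sum_apply _ hU.measurableSet, ENNReal.tsum_eq_zero]
      intro k
      rw [Measure.add_apply, add_eq_zero] at h0
      by_cases hk : μ (Ico (e k) (e (k+1))) = 0
      · have h2 := h0.2
        rw [hθ, Measure.restrict_apply hU.measurableSet] at h2
        rw [Measure.restrict_apply hU.measurableSet]
        refine measure_mono_null (inter_subset_inter_right _ ?_) h2
        exact subset_iUnion_of_subset k (subset_iUnion_of_subset hk subset_rfl)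
      · have h1 := h0.1
        rw [hνdef, Measure.add_apply, add_eq_zero, Measure.smul_apply, Measure.smul_apply,
          smul_eq_mul, smul_eq_mul, cellAvg, Measure.sum_apply _ hU.measurableSet] at h1
        have h3 := (mul_eq_zero.1 h1.2).resolve_left hη0
        rw [ENNReal.tsum_eq_zero] at h3
        have h4 := h3 k
        rw [Measure.smul_apply, smul_eq_mul] at h4
        refine (mul_eq_zero.1 h4).resolve_left ?_
        exact (ENNReal.div_pos hk (measure_ne_top _ _)).ne')
  have fixe : ∀ k, φ (e k) = e k := fun k => hfix _ (by simp [hends k])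
  have fixE : ∀ y ∈ E, φ y = y := by
    intro y hy
    simp only [hE, mem_iUnion, exists_prop] at hy
    obtain ⟨k, hk0, hk⟩ := hy
    apply hfix
    have key : ∀ m : Measure I, m ≤ volume → m (Ico (e k) (e (k+1))) = 0 →
        m (Iic y) = m (Iic (e k)) := by
      intro m hm hm0
      apply le_antisymm
      · have : Iic y ⊆ Iic (e k) ∪ Ico (e k) (e (k+1)) := by
          intro w hw
          by_cases hwe : w ≤ e k
          · left; exact hwe
          · right; exact ⟨(not_le.1 hwe).le, lt_of_le_of_lt hw hk.2⟩
        refine (measure_mono this).trans ((measure_union_le _ _).trans ?_)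
        rw [hm0, add_zero]
      · exact measure_mono (Iic_subset_Iic.2 hk.1)
    rw [Measure.add_apply, Measure.add_apply, key μ hμ hk0, key ν hν (hcell k ▸ hk0), hends k]
  refine ⟨φ, cφ, fixe, ?_, ?_⟩
  · intro y
    by_cases hy : y = 1
    · have Iic1 : Iic (1:I) = univ := by ext x; simpa using (show x ≤ 1 from x.2.2)
      rw [hy, hfix 1 (by rw [Iic1]; simp [huniv])]
      simpa using hh
    · obtain ⟨k, hk⟩ := hcov y hy
      have h1 : (e k : ℝ) ≤ φ y := by
        have := mφ hk.1; rw [fixe] at this; exact this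
      have h2 : (φ y : ℝ) ≤ e (k+1) := by
        have := mφ hk.2.le; rw [fixe] at this; exact this
      have h3 : (e k : ℝ) ≤ y := hk.1
      have h4 : (y : ℝ) ≤ e (k+1) := hk.2.le
      have := hmesh k
      rw [abs_le]; constructor <;> linarith
  · have hθmap : θ.map φ = θ := by
      have : φ =ᵐ[θ] id := by
        rw [hθ]
        exact ae_restrict_of_forall_mem hEm fixE
      rw [Measure.map_congr this, Measure.map_id]
    rw [Measure.map_add _ _ cφ.measurable, hθmap] at hmap
    ext s hs
    have := congrArg (fun m : Measure I => m s) hmap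
    simp only [Measure.add_apply] at this
    exact (ENNReal.add_left_inj (measure_ne_top θ s)).1 this

lemma cellAvg_add (e : ℤ → I) (he : Monotone e)
    (hcov : ∀ y : I, y ≠ 1 → ∃ k, y ∈ Ico (e k) (e (k+1))) (μ₁ μ₂ : Measure I)
    (h : μ₁ + μ₂ = volume) : cellAvg e μ₁ + cellAvg e μ₂ = volume := by
  conv_rhs => rw [← cells_sum e he hcov]
  rw [cellAvg, cellAvg, Measure.sum_add_sum]
  congr 1
  funext k
  rw [← add_smul, ← ENNReal.add_div, ← Measure.add_apply, h]
  by_cases h0 : volume (Ico (e k) (e (k+1))) = 0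
  · rw [Measure.restrict_eq_zero.2 h0, smul_zero]
  · rw [ENNReal.div_self h0 (measure_ne_top _ _), one_smul]

lemma exists_cells (c : I) (h : ℝ) (hh : 0 < h) : ∃ e : ℤ → I, Monotone e ∧
    (∀ y : I, y ≠ 1 → ∃ k, y ∈ Ico (e k) (e (k+1))) ∧
    (∀ k, (e (k+1) : ℝ) - e k ≤ h) ∧ e 0 = c := by
  refine ⟨fun k => projIcc 0 1 zero_le_one ((c:ℝ) + k * h), ?_, ?_, ?_, ?_⟩
  · intro i j hij
    apply monotone_projIcc
    have : (i:ℝ) ≤ j := by exact_mod_cast hij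
    nlinarith
  · intro y hy
    have hy1 : (y:ℝ) < 1 := lt_of_le_of_ne y.2.2 (fun hh => hy (Subtype.ext hh))
    refine ⟨⌊((y:ℝ) - c) / h⌋, ?_, ?_⟩
    · rw [← Subtype.coe_le_coe, coe_projIcc]
      have := Int.floor_le (((y:ℝ) - c) / h)
      rw [le_div_iff₀ hh] at this
      apply max_le y.2.1
      exact (min_le_right _ _).trans (by linarith)
    · rw [← Subtype.coe_lt_coe, coe_projIcc]
      have := Int.lt_floor_add_one (((y:ℝ) - c) / h)
      rw [div_lt_iff₀ hh] at this
      apply lt_max_of_lt_right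
      apply lt_min hy1
      push_cast
      linarith
  · intro k
    have := abs_projIcc_sub_projIcc (h := (zero_le_one : (0:ℝ) ≤ 1))
      (c := (c:ℝ) + ((k+1 : ℤ):ℝ) * h) (d := (c:ℝ) + (k:ℝ) * h)
    have h2 := (le_abs_self _).trans this
    refine h2.trans ?_
    rw [abs_le]
    push_cast
    constructor <;> linarith
  · simp

lemma density (f : C(I, I)) (hf : MeasurePreserving f volume volume) (t : I) (h : ℝ) (hh : 0 < h)
    (η : ℝ≥0∞) (hη0 : η ≠ 0) (hη1 : η ≤ 1) :
    ∃ g : C(I, I), MeasurePreserving g volume volume ∧ (∀ x, |(g x : ℝ) - f x| ≤ h) ∧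
      ∃ A : Set I, MeasurableSet A ∧ volume (Iic t \ g ⁻¹' A) ≤ η ∧
        volume (g ⁻¹' A \ Iic t) ≤ η := by
  obtain ⟨e, he, hcov, hmesh, he0⟩ := exists_cells (f t) h hh
  have hfm : Measurable f := f.continuous.measurable
  set μ₁ := ((volume : Measure I).restrict (Iic t)).map f with hμ₁
  set μ₂ := ((volume : Measure I).restrict (Iic t)ᶜ).map f with hμ₂
  have hadd : μ₁ + μ₂ = volume := by
    rw [hμ₁, hμ₂, ← Measure.map_add _ _ hfm, Measure.restrict_add_restrict_compl measurableSet_Iic,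
      hf.map_eq]
  have h1le : μ₁ ≤ volume := by rw [← hadd]; exact Measure.le_add_right le_rfl
  have h2le : μ₂ ≤ volume := by rw [← hadd]; exact Measure.le_add_left le_rfl
  -- the set A
  have hak : ∀ k, ∃ a : I, a ≤ e (k+1) ∧
      volume (Ico (e k) a) = μ₁ (Ico (e k) (e (k+1))) := by
    intro k
    have h0 := h1le (Ico (e k) (e (k+1)))
    have hlt : μ₁ (Ico (e k) (e (k+1))) ≠ ⊤ := ne_top_of_le_ne_top (measure_ne_top _ _) h0
    rw [unitInterval.volume_Ico] at h0
    have hek : (e k : ℝ) ≤ e (k+1) := he (by omega)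
    have h1 := ENNReal.toReal_mono (by finiteness) h0
    rw [ENNReal.toReal_ofReal (by linarith)] at h1
    have h2 : 0 ≤ (μ₁ (Ico (e k) (e (k+1)))).toReal := ENNReal.toReal_nonneg
    refine ⟨⟨e k + (μ₁ (Ico (e k) (e (k+1)))).toReal, ?_, ?_⟩, ?_, ?_⟩
    · exact add_nonneg (e k).2.1 h2
    · have := (e (k+1)).2.2
      linarith
    · rw [← Subtype.coe_le_coe]
      simp only; linarith
    · rw [unitInterval.volume_Ico]
      simp only [add_sub_cancel_left]
      exact ENNReal.ofReal_toReal hlt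
  choose a ha hav using hak
  set A : Set I := ⋃ k, Ico (e k) (a k) with hAdef
  have hAm : MeasurableSet A := MeasurableSet.iUnion fun k => measurableSet_Ico
  have hAk : ∀ k, A ∩ Ico (e k) (e (k+1)) = Ico (e k) (a k) := by
    intro k
    ext y
    constructor
    · rintro ⟨hyA, hyk⟩
      obtain ⟨j, hj⟩ := mem_iUnion.1 hyA
      have : j = k := by
        by_contra hne
        exact (Set.disjoint_left.1 (cells_disj e he hne)) ⟨hj.1, hj.2.trans_le (ha j)⟩ hyk
      exact this ▸ hj
    · intro hy
      exact ⟨mem_iUnion.2 ⟨k, hy⟩, hy.1, hy.2.trans_le (ha k)⟩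
  have hA1 : ∀ k, volume (A ∩ Ico (e k) (e (k+1))) = μ₁ (Ico (e k) (e (k+1))) := by
    intro k; rw [hAk, hav]
  have hA2 : ∀ k, volume (Aᶜ ∩ Ico (e k) (e (k+1))) = μ₂ (Ico (e k) (e (k+1))) := by
    intro k
    have h3 := measure_inter_add_sdiff (μ := (volume : Measure I)) (Ico (e k) (e (k+1))) hAm
    have h4 : μ₁ (Ico (e k) (e (k+1))) + μ₂ (Ico (e k) (e (k+1))) =
        volume (Ico (e k) (e (k+1))) := by
      rw [← Measure.add_apply, hadd]
    rw [inter_comm, hA1, ← h4] at h3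
    have hlt : μ₁ (Ico (e k) (e (k+1))) ≠ ⊤ :=
      ne_top_of_le_ne_top (measure_ne_top volume _) (h1le _)
    rw [inter_comm, ← sdiff_eq]
    exact (ENNReal.add_right_inj hlt).1 h3
  obtain ⟨φ, cφ, fφ, dφ, mφ⟩ := cell_transport e he hcov h hmesh hh.le μ₁ h1le A hA1 η hη0 hη1
  obtain ⟨ψ, cψ, fψ, dψ, mψ⟩ :=
    cell_transport e he hcov h hmesh hh.le μ₂ h2le Aᶜ hA2 η hη0 hη1
  have hηs : 1 - η + η = 1 := tsub_add_cancel_of_le hη1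
  have hsum : μ₁.map φ + μ₂.map ψ = volume := by
    rw [mφ, mψ]
    calc _ = (1 - η) • ((volume : Measure I).restrict A + (volume : Measure I).restrict Aᶜ)
          + η • (cellAvg e μ₁ + cellAvg e μ₂) := by
            rw [smul_add, smul_add]; abel
      _ = volume := by
            rw [cellAvg_add e he hcov _ _ hadd, Measure.restrict_add_restrict_compl hAm,
              ← add_smul, hηs, one_smul]
  have cg : Continuous (fun x : I => if x ≤ t then φ (f x) else ψ (f x)) := by
    refine Continuous.if_le (by fun_prop) (by fun_prop) continuous_id continuous_const ?_
    rintro x hx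
    have hx : x = t := hx
    rw [hx, ← he0, fφ, fψ]
  refine ⟨⟨_, cg⟩, ?_, ?_, A, hAm, ?_, ?_⟩
  · refine ⟨cg.measurable, ?_⟩
    simp only [ContinuousMap.coe_mk]
    conv_lhs => rw [← Measure.restrict_add_restrict_compl (μ := volume)
      (measurableSet_Iic (a := t)), Measure.map_add _ _ cg.measurable]
    refine Eq.trans ?_ hsum
    rw [hμ₁, hμ₂, Measure.map_map cφ.measurable hfm, Measure.map_map cψ.measurable hfm]
    congr 1
    · apply Measure.map_congr
      refine ae_restrict_of_forall_mem measurableSet_Iic ?_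
      intro x hx
      exact if_pos hx
    · apply Measure.map_congr
      refine ae_restrict_of_forall_mem measurableSet_Iic.compl ?_
      intro x hx
      exact if_neg hx
  · intro x
    simp only [ContinuousMap.coe_mk]
    split_ifs
    · exact dφ _
    · exact dψ _
  · calc _ = (μ₁.map φ) Aᶜ := by
          rw [hμ₁, Measure.map_map cφ.measurable hfm,
            Measure.map_apply (cφ.measurable.comp hfm) hAm.compl,
            Measure.restrict_apply ((cφ.measurable.comp hfm) hAm.compl)]
          congr 1
          ext x
          by_cases hx : x ≤ t <;> simp [hx]
      _ ≤ η := by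
          rw [mφ, Measure.add_apply, Measure.smul_apply, Measure.smul_apply,
            Measure.restrict_apply hAm.compl]
          simp only [compl_inter_self, measure_empty, smul_eq_mul, mul_zero, zero_add]
          refine mul_le_of_le_one_right bot_le ?_
          exact (cellAvg_le e he hcov μ₁ h1le _).trans prob_le_one
  · calc _ = (μ₂.map ψ) A := by
          rw [hμ₂, Measure.map_map cψ.measurable hfm,
            Measure.map_apply (cψ.measurable.comp hfm) hAm,
            Measure.restrict_apply ((cψ.measurable.comp hfm) hAm)]
          congr 1
          ext x
          by_cases hx : x ≤ t
          · simp [hx]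
          · simp [hx, not_le.1 hx]
      _ ≤ η := by
          rw [mψ, Measure.add_apply, Measure.smul_apply, Measure.smul_apply,
            Measure.restrict_apply hAm]
          simp only [inter_compl_self, measure_empty, smul_eq_mul, mul_zero, zero_add]
          refine mul_le_of_le_one_right bot_le ?_
          exact (cellAvg_le e he hcov μ₂ h2le _).trans prob_le_one

lemma isClosed_CLam : IsClosed {f : C(I, I) | MeasurePreserving f volume volume} := by
  have : {f : C(I, I) | MeasurePreserving f volume volume} =
      ⋂ u : BoundedContinuousFunction I ℝ, {f : C(I, I) | ∫ x, u (f x) = ∫ x, u x} := by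
    ext f
    simp only [mem_ofPred_eq, mem_iInter]
    constructor
    · intro hf u
      have := integral_map (μ := volume) (φ := f) f.continuous.measurable.aemeasurable
        (f := u) u.continuous.aestronglyMeasurable
      rw [hf.map_eq] at this
      exact this.symm
    · intro hu
      refine ⟨f.continuous.measurable, ?_⟩
      have : IsFiniteMeasure ((volume : Measure I).map f) := Measure.isFiniteMeasure_map _ _
      apply ext_of_forall_integral_eq_of_IsFiniteMeasure
      intro u
      rw [integral_map f.continuous.measurable.aemeasurable u.continuous.aestronglyMeasurable]
      exact hu u
  rw [this]
  refine isClosed_iInter fun u => isClosed_eq ?_ continuous_const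
  refine continuous_of_dominated (bound := fun _ => ‖u‖) (fun f => ?_) (fun f => ?_)
    (integrable_const _) ?_
  · exact (u.continuous.comp f.continuous).aestronglyMeasurable
  · exact Filter.Eventually.of_forall fun x => u.norm_coe_le_norm _
  · exact Filter.Eventually.of_forall fun x => u.continuous.comp (by fun_prop)

instance : BaireSpace CLam := by
  have : CompleteSpace CLam := isClosed_CLam.completeSpace_coe
  infer_instance

/-- The `L¹` distance between `u ∘ f` and the indicator of `[0,t]`. -/
noncomputable def dd (t : I) (u : C(I, ℝ)) (f : CLam) : ℝ :=
  ∫ x, ‖u (f.1 x) - (Iic t).indicator (fun _ => (1:ℝ)) x‖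

lemma meas_ind (t : I) : Measurable ((Iic t).indicator (fun _ => (1:ℝ))) :=
  measurable_const.indicator measurableSet_Iic

lemma meas_dd (t : I) (u : C(I, ℝ)) (f : C(I, I)) :
    Measurable (fun x => u (f x) - (Iic t).indicator (fun _ => (1:ℝ)) x) :=
  (u.continuous.comp f.continuous).measurable.sub (meas_ind t)

lemma bound_dd (t : I) (u : C(I, ℝ)) (y x : I) :
    ‖u y - (Iic t).indicator (fun _ => (1:ℝ)) x‖ ≤ ‖u‖ + 1 := by
  refine (norm_sub_le _ _).trans (add_le_add (u.norm_coe_le_norm _) ?_)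
  refine (norm_indicator_le_norm_self _ _).trans (by simp)

lemma integrable_dd (t : I) (u : C(I, ℝ)) (f : C(I, I)) :
    Integrable (fun x => u (f x) - (Iic t).indicator (fun _ => (1:ℝ)) x) :=
  Integrable.of_bound (meas_dd t u f).aestronglyMeasurable (‖u‖ + 1)
    (Filter.Eventually.of_forall fun _ => bound_dd t u _ _)

lemma continuous_dd (t : I) (u : C(I, ℝ)) : Continuous (dd t u) := by
  refine continuous_of_dominated (bound := fun _ => ‖u‖ + 1) (fun f => ?_) (fun f => ?_)
    (integrable_const _) ?_
  · exact (meas_dd t u f.1).norm.aestronglyMeasurable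
  · refine Filter.Eventually.of_forall fun x => ?_
    rw [norm_norm]
    exact bound_dd t u _ _
  · refine Filter.Eventually.of_forall fun x => ?_
    have : Continuous fun f : CLam => f.1 x :=
      (continuous_eval_const x).comp continuous_subtype_val
    exact ((u.continuous.comp this).sub continuous_const).norm

def UU (t : I) (ε : ℝ) : Set CLam := ⋃ u : C(I, ℝ), {f | dd t u f < ε}

lemma isOpen_UU (t : I) (ε : ℝ) : IsOpen (UU t ε) :=
  isOpen_iUnion fun u => isOpen_lt (continuous_dd t u) continuous_const

lemma dense_UU (t : I) (ε : ℝ) (hε : 0 < ε) : Dense (UU t ε) := by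
  rw [Metric.dense_iff]
  intro f r hr
  obtain ⟨η, hη0, hη1, hηε⟩ : ∃ η : ℝ, 0 < η ∧ η ≤ 1 ∧ η ≤ ε / 8 :=
    ⟨min 1 (ε / 8), by positivity, min_le_left _ _, min_le_right _ _⟩
  obtain ⟨g, hg, hgf, A, hA, h1, h2⟩ := density f.1 f.2 t (r / 2) (by positivity)
    (ENNReal.ofReal η) (by simpa using hη0) (by simpa using hη1)
  refine ⟨⟨g, hg⟩, ?_, ?_⟩
  · rw [Metric.mem_ball, Subtype.dist_eq]
    refine lt_of_le_of_lt ((ContinuousMap.dist_le (by positivity)).2 (fun x => ?_))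
      (half_lt_self hr)
    exact hgf x
  · have hAi : Integrable (A.indicator (fun _ => (1:ℝ))) (volume : Measure I) :=
      (integrable_const _).indicator hA
    obtain ⟨u, hu, -⟩ := hAi.exists_boundedContinuous_integral_sub_le (ε := ε / 4) (by positivity)
    refine mem_iUnion.2 ⟨u.toContinuousMap, ?_⟩
    show dd t u.toContinuousMap ⟨g, hg⟩ < ε
    have hum : Integrable (fun y : I => ‖A.indicator (fun _ => (1:ℝ)) y - u y‖) := by
      refine (hAi.sub ?_).norm
      exact Integrable.of_bound u.continuous.aestronglyMeasurable ‖u‖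
        (Filter.Eventually.of_forall fun _ => u.norm_coe_le_norm _)
    have hcomp : ∫ x, ‖A.indicator (fun _ => (1:ℝ)) (g x) - u (g x)‖ =
        ∫ y, ‖A.indicator (fun _ => (1:ℝ)) y - u y‖ := by
      have := integral_map (μ := volume) (φ := g) g.continuous.measurable.aemeasurable
        (f := fun y => ‖A.indicator (fun _ => (1:ℝ)) y - u y‖)
        (by rw [hg.map_eq]; exact hum.aestronglyMeasurable)
      rw [hg.map_eq] at this
      exact this.symm
    have hcompi : Integrable (fun x : I => ‖A.indicator (fun _ => (1:ℝ)) (g x) - u (g x)‖) :=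
      hg.integrable_comp_of_integrable hum
    have hgA : MeasurableSet (g ⁻¹' A) := g.continuous.measurable hA
    set S := Iic t \ g ⁻¹' A ∪ g ⁻¹' A \ Iic t with hS
    have hSm : MeasurableSet S := (measurableSet_Iic.diff hgA).union (hgA.diff measurableSet_Iic)
    have hSv : (volume : Measure I).real S ≤ 2 * η := by
      refine (measureReal_union_le _ _).trans ?_
      have a1 := ENNReal.toReal_mono ENNReal.ofReal_ne_top h1
      have a2 := ENNReal.toReal_mono ENNReal.ofReal_ne_top h2
      rw [ENNReal.toReal_ofReal hη0.le] at a1 a2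
      simp only [Measure.real]
      linarith
    have hSi : Integrable (S.indicator (fun _ => (1:ℝ))) (volume : Measure I) :=
      (integrable_const _).indicator hSm
    calc dd t u.toContinuousMap ⟨g, hg⟩
        ≤ ∫ x, (‖A.indicator (fun _ => (1:ℝ)) (g x) - u (g x)‖ +
            S.indicator (fun _ => (1:ℝ)) x) := by
          refine integral_mono (integrable_dd t u.toContinuousMap g).norm (hcompi.add hSi) ?_
          intro x
          simp only [BoundedContinuousFunction.coe_toContinuousMap, Real.norm_eq_abs]
          have key : |A.indicator (fun _ => (1:ℝ)) (g x) - (Iic t).indicator (fun _ => (1:ℝ)) x| ≤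
              S.indicator (fun _ => (1:ℝ)) x := by
            by_cases hx1 : x ≤ t <;> by_cases hx2 : g x ∈ A <;>
              simp [hS, indicator, hx1, hx2]
          have := abs_sub_le (u (g x)) (A.indicator (fun _ => (1:ℝ)) (g x))
            ((Iic t).indicator (fun _ => (1:ℝ)) x)
          rw [abs_sub_comm (u (g x)) (A.indicator (fun _ => (1:ℝ)) (g x))] at this
          linarith
      _ = (∫ x, ‖A.indicator (fun _ => (1:ℝ)) (g x) - u (g x)‖) + (volume : Measure I).real S := by
          rw [integral_add hcompi hSi, integral_indicator_const _ hSm]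
          simp
      _ ≤ ε / 4 + 2 * (ε / 8) := by
          rw [hcomp]
          gcongr
          linarith
      _ < ε := by linarith

lemma ae_limit (t : I) (f : CLam) (hf : ∀ n : ℕ, f ∈ UU t (1 / (n + 1))) :
    ∃ u : ℕ → C(I, ℝ), ∀ᵐ x : I, Filter.Tendsto (fun n => u n (f.1 x)) Filter.atTop
      (nhds ((Iic t).indicator (fun _ => (1:ℝ)) x)) := by
  have : ∀ n : ℕ, ∃ u : C(I, ℝ), dd t u f < 1 / (n + 1) := fun n => by
    simpa [UU] using hf n
  choose u hu using this
  have hm : TendstoInMeasure volume (fun n x => u n (f.1 x)) Filter.atTop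
      ((Iic t).indicator (fun _ => (1:ℝ))) := by
    refine tendstoInMeasure_of_tendsto_eLpNorm (p := 1) one_ne_zero
      (fun n => ((u n).continuous.comp f.1.continuous).aestronglyMeasurable)
      (meas_ind t).aestronglyMeasurable ?_
    have h1 : ∀ n, eLpNorm ((fun x => u n (f.1 x)) - (Iic t).indicator (fun _ => (1:ℝ))) 1 volume =
        ENNReal.ofReal (dd t (u n) f) := by
      intro n
      rw [eLpNorm_one_eq_lintegral_enorm, dd,
        ofReal_integral_norm_eq_lintegral_enorm (integrable_dd t (u n) f.1)]
      rfl
    simp_rw [h1]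
    rw [← ENNReal.ofReal_zero]
    refine ENNReal.tendsto_ofReal ?_
    refine squeeze_zero (fun n => integral_nonneg fun _ => norm_nonneg _) (fun n => (hu n).le) ?_
    exact tendsto_one_div_add_atTop_nhds_zero_nat
  obtain ⟨ns, -, hns⟩ := hm.exists_seq_tendsto_ae
  exact ⟨fun n => u (ns n), hns⟩

lemma exists_bij (f : CLam) (X₀ : Set I) (hX₀ : MeasurableSet X₀) (hv : volume X₀ᶜ = 0)
    (hinj : InjOn f.1 X₀) :
    ∃ X : Set I, MeasurableSet X ∧ volume X = 1 ∧ BijOn f.1 X X := by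
  have hfc : Continuous f.1 := f.1.continuous
  set X' : Set I := ⋂ n : ℕ, f.1^[n] ⁻¹' X₀ with hX'
  have hX'm : MeasurableSet X' :=
    MeasurableSet.iInter fun n => (hfc.iterate n).measurable hX₀
  have hX'v : volume X' = 1 := by
    rw [← prob_compl_eq_zero_iff hX'm, hX', compl_iInter, measure_iUnion_null_iff]
    intro n
    rw [← preimage_compl]
    rw [(f.2.iterate n).measure_preimage hX₀.compl.nullMeasurableSet, hv]
  have hsub0 : X' ⊆ X₀ := fun x hx => mem_iInter.1 hx 0
  have hinv : ∀ x ∈ X', f.1 x ∈ X' := by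
    intro x hx
    refine mem_iInter.2 fun n => ?_
    have := mem_iInter.1 hx (n+1)
    simpa [Function.iterate_succ_apply] using this
  have hinj' : InjOn f.1 X' := hinj.mono hsub0
  set S : ℕ → Set I := fun n => f.1^[n] '' X' with hS
  have hSsucc : ∀ n, S (n+1) = f.1 '' S n := by
    intro n
    simp only [hS, Function.iterate_succ', image_comp]
  have hprop : ∀ n, MeasurableSet (S n) ∧ S n ⊆ X' ∧ volume (S n) = 1 := by
    intro n
    induction n with
    | zero => simp [hS, hX'm, hX'v]
    | succ n ih =>
      obtain ⟨i1, i2, i3⟩ := ih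
      rw [hSsucc]
      have hm : MeasurableSet (f.1 '' S n) :=
        i1.image_of_continuousOn_injOn hfc.continuousOn (hinj'.mono i2)
      refine ⟨hm, ?_, ?_⟩
      · rintro _ ⟨x, hx, rfl⟩
        exact hinv x (i2 hx)
      · apply le_antisymm prob_le_one
        rw [← f.2.measure_preimage hm.nullMeasurableSet, ← i3]
        exact measure_mono (subset_preimage_image _ _)
  have hXm : MeasurableSet (⋂ n, S n) := MeasurableSet.iInter fun n => (hprop n).1
  refine ⟨⋂ n, S n, hXm, ?_, ?_, ?_, ?_⟩
  · rw [← prob_compl_eq_zero_iff hXm, compl_iInter, measure_iUnion_null_iff]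
    intro n
    rw [prob_compl_eq_zero_iff (hprop n).1]
    exact (hprop n).2.2
  · intro x hx
    refine mem_iInter.2 fun n => ?_
    have hn := mem_iInter.1 hx
    cases n with
    | zero => simpa [hS] using hinv x ((hprop 0).2.1 (hn 0))
    | succ n => rw [hSsucc]; exact mem_image_of_mem _ (hn n)
  · exact hinj'.mono fun x hx => (hprop 0).2.1 (mem_iInter.1 hx 0)
  · intro y hy
    have hn : ∀ n, ∃ x ∈ S n, f.1 x = y := by
      intro n
      have := mem_iInter.1 hy (n+1)
      rw [hSsucc] at this
      exact this
    obtain ⟨x, hx, hxy⟩ := hn 0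
    refine ⟨x, mem_iInter.2 fun n => ?_, hxy⟩
    obtain ⟨x', hx', hxy'⟩ := hn n
    have : x = x' := hinj' ((hprop 0).2.1 hx) ((hprop n).2.1 hx') (hxy.trans hxy'.symm)
    exact this ▸ hx'

/-- The result with the set `X` measurable. -/
theorem stmt13_measurable :
    ∃ Q : Set CLam, IsGδ Q ∧ Dense Q ∧
      ∀ f ∈ Q, ∃ X : Set unitInterval, MeasurableSet X ∧ volume X = 1 ∧
        Set.BijOn f.1 X X ∧
        ∀ M : Set unitInterval, MeasurableSet M →
          volume M = volume (M ∩ X) ∧ volume M = volume (⇑f.1 ⁻¹' (M ∩ X)) := by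
  set s := TopologicalSpace.denseSeq I with hs
  refine ⟨⋂ p : ℕ × ℕ, UU (s p.1) (1 / ((p.2 : ℝ) + 1)), ?_, ?_, ?_⟩
  · exact IsGδ.iInter_of_isOpen fun p => isOpen_UU _ _
  · exact dense_iInter_of_isOpen (fun p => isOpen_UU _ _)
      (fun p => dense_UU _ _ (by positivity))
  · intro f hf
    have hlim : ∀ i : ℕ, ∃ u : ℕ → C(I, ℝ), ∀ᵐ x : I,
        Filter.Tendsto (fun n => u n (f.1 x)) Filter.atTop
          (nhds ((Iic (s i)).indicator (fun _ => (1:ℝ)) x)) :=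
      fun i => ae_limit (s i) f (fun n => mem_iInter.1 hf (i, n))
    choose u hu using hlim
    have hall := ae_all_iff.2 hu
    obtain ⟨N, hN, hNm, hN0⟩ := exists_measurable_superset_of_null (ae_iff.1 hall)
    obtain ⟨X, hXm, hXv, hbij⟩ := exists_bij f Nᶜ hNm.compl (by rwa [compl_compl]) (by
      have key : ∀ x ∈ Nᶜ, ∀ y ∈ Nᶜ, f.1 x = f.1 y → ¬ x < y := by
        intro x hx y hy hxy hlt
        have hx' : ∀ i, Filter.Tendsto (fun n => u i n (f.1 x)) Filter.atTop
          (nhds ((Iic (s i)).indicator (fun _ => (1:ℝ)) x)) := by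
          by_contra hcon; exact hx (hN hcon)
        have hy' : ∀ i, Filter.Tendsto (fun n => u i n (f.1 y)) Filter.atTop
          (nhds ((Iic (s i)).indicator (fun _ => (1:ℝ)) y)) := by
          by_contra hcon; exact hy (hN hcon)
        obtain ⟨_, ⟨i, rfl⟩, hi⟩ :=
          (TopologicalSpace.denseRange_denseSeq I).exists_between hlt
        have h1 := hx' i
        rw [hxy] at h1
        have h2 := tendsto_nhds_unique h1 (hy' i)
        have hxi : x ≤ s i := hi.1.le
        have hyi : ¬ y ≤ s i := not_le.2 hi.2
        simp [indicator, hxi, hyi] at h2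
      intro x hx y hy hxy
      exact le_antisymm (not_lt.1 (key y hy x hx hxy.symm)) (not_lt.1 (key x hx y hy hxy)))
    refine ⟨X, hXm, hXv, hbij, fun M hM => ?_⟩
    have h1 : volume M = volume (M ∩ X) := by
      have hc : volume Xᶜ = 0 := (prob_compl_eq_zero_iff hXm).2 hXv
      have := measure_inter_add_sdiff (μ := (volume : Measure I)) M hXm
      rw [measure_mono_null (s := M \ X) (fun x hx => hx.2) hc, add_zero] at this
      exact this.symm
    refine ⟨h1, ?_⟩
    rw [f.2.measure_preimage (hM.inter hXm).nullMeasurableSet, ← h1]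

/-- There is a dense `G_δ` subset `Q` of `C_λ` such that for each `f ∈ Q` there exists a
set `X_f ⊆ I` of Lebesgue measure `1` on which `f` is a bijection, with
`λ(M) = λ(M ∩ X_f) = λ(f⁻¹(M ∩ X_f))` for every Borel set `M ⊆ I`. -/
theorem stmt13 :
    ∃ Q : Set CLam, IsGδ Q ∧ Dense Q ∧
      ∀ f ∈ Q, ∃ X : Set unitInterval, volume X = 1 ∧
        Set.BijOn f.1 X X ∧
        ∀ M : Set unitInterval, MeasurableSet M →
          volume M = volume (M ∩ X) ∧ volume M = volume (⇑f.1 ⁻¹' (M ∩ X)) := by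
  obtain ⟨Q, h1, h2, h3⟩ := stmt13_measurable
  refine ⟨Q, h1, h2, fun f hf => ?_⟩
  obtain ⟨X, -, h⟩ := h3 f hf
  exact ⟨X, h⟩
end
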